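/- arXiv:1309.1147 — 2 statements merged into one kernel-verified Lean document; each statement's English description precedes it below -/
import Mathlib

section
/- For every integer d ≥ 2 there is a constant c > 0 such that for all sufficiently large n, OT_d(n) ≥ twr_d(⌈c·n⌉); equivalently, there exists a sequence of twr_d(⌈c·n⌉) − 1 points in general position in R^d containing no order-type homogeneous subsequence of length n. -/
open Set

/-- `h` is an (affine) hyperplane in `ℝ^d`: the solution set of a nontrivial
linear equation `∑ i, u i * x i = c`. -/
def IsHyperplane {d : ℕ} (h : Set (Fin d → ℝ)) : Prop :=
  ∃ (u : Fin d → ℝ) (c : ℝ), u ≠ 0 ∧ h = {x | ∑ i, u i * x i = c}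

/-- A curve `γ` is `k`-crossing on the interval `I` if for every hyperplane `h`
the set `{t ∈ I : γ t ∈ h}` has at most `k` elements. -/
def CurveCrossing {d : ℕ} (k : ℕ) (I : Set ℝ) (γ : ℝ → (Fin d → ℝ)) : Prop :=
  ∀ h : Set (Fin d → ℝ), IsHyperplane h → {t | t ∈ I ∧ γ t ∈ h}.encard ≤ (k : ℕ∞)

/-- The polygonal path `p 0 p 1 ⋯ p (n-1)`, as a subset of `ℝ^d`
(the union of its edges). -/
def PathSet {d n : ℕ} (p : Fin n → (Fin d → ℝ)) : Set (Fin d → ℝ) :=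
  ⋃ (i : Fin n) (h : (i : ℕ) + 1 < n), segment ℝ (p i) (p ⟨(i : ℕ) + 1, h⟩)

/-- A polygonal path is `k`-crossing if every hyperplane containing no edge of the
path intersects the path in at most `k` points. -/
def PathCrossing {d n : ℕ} (k : ℕ) (p : Fin n → (Fin d → ℝ)) : Prop :=
  ∀ h : Set (Fin d → ℝ), IsHyperplane h →
    (∀ (i : Fin n) (hi : (i : ℕ) + 1 < n), ¬ segment ℝ (p i) (p ⟨(i : ℕ) + 1, hi⟩) ⊆ h) →
    (PathSet p ∩ h).encard ≤ (k : ℕ∞)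

/-- A point sequence in `ℝ^d` is in general position if every at most `d+1` of the
points are affinely independent. -/
def GeneralPosition {d n : ℕ} (p : Fin n → (Fin d → ℝ)) : Prop :=
  ∀ s : Finset (Fin n), s.card ≤ d + 1 → AffineIndependent ℝ (fun i : s => p i)

/-- The sign (orientation) of an ordered `(d+1)`-tuple of points of `ℝ^d`: the sign of
the determinant of the `(d+1) × (d+1)` matrix whose `j`-th column is `(1, q j)`. -/
noncomputable def otSign {d : ℕ} (q : Fin (d + 1) → (Fin d → ℝ)) : ℝ :=
  Real.sign (Matrix.det (Matrix.of fun i j : Fin (d + 1) =>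
    (Fin.cons (1 : ℝ) (q j) : Fin (d + 1) → ℝ) i))

/-- A point sequence is order-type homogeneous if all of its increasing-index
`(d+1)`-tuples have the same nonzero sign. -/
def OrderTypeHomogeneous {d n : ℕ} (p : Fin n → (Fin d → ℝ)) : Prop :=
  ∃ σ : ℝ, σ ≠ 0 ∧ ∀ f : Fin (d + 1) → Fin n, StrictMono f →
    otSign (fun j => p (f j)) = σ

/-- The sign of a `(d+1)`-element subset of the index set of a point sequence:
the sign of the corresponding increasing-index `(d+1)`-tuple (junk value `0` if the
set does not have `d+1` elements). -/
noncomputable def finsetSign {d n : ℕ} (p : Fin n → (Fin d → ℝ)) (s : Finset (Fin n)) : ℝ :=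
  if h : s.card = d + 1 then otSign (fun j => p ((s.orderIsoOfFin h) j : Fin n)) else 0

/-- A point sequence in `ℝ^d` is in super-general position if for each `1 ≤ k ≤ d` its
projection to the first `k` coordinates is in general position. -/
def SuperGeneralPosition {d n : ℕ} (p : Fin n → (Fin d → ℝ)) : Prop :=
  ∀ (k : ℕ), 1 ≤ k → ∀ (hk : k ≤ d),
    GeneralPosition (fun i => fun j : Fin k => p i (Fin.castLE hk j))

/-- A point sequence in `ℝ^d` is super-order-type homogeneous if for each `1 ≤ k ≤ d` its
projection to the first `k` coordinates is order-type homogeneous. -/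
def SuperOrderTypeHomogeneous {d n : ℕ} (p : Fin n → (Fin d → ℝ)) : Prop :=
  ∀ (k : ℕ), 1 ≤ k → ∀ (hk : k ≤ d),
    OrderTypeHomogeneous (fun i => fun j : Fin k => p i (Fin.castLE hk j))

/-- `OTNum d n` is the smallest `N` such that every sequence of `N` points in general
position in `ℝ^d` contains an order-type homogeneous subsequence of length `n`. -/
noncomputable def OTNum (d n : ℕ) : ℕ :=
  sInf {N : ℕ | ∀ p : Fin N → (Fin d → ℝ), GeneralPosition p →
    ∃ f : Fin n → Fin N, StrictMono f ∧ OrderTypeHomogeneous (fun i => p (f i))}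

/-- `COTNum d n` is the smallest `N` such that every sequence of `N` points in
super-general position in `ℝ^d` contains a super-order-type homogeneous subsequence
of length `n`. -/
noncomputable def COTNum (d n : ℕ) : ℕ :=
  sInf {N : ℕ | ∀ p : Fin N → (Fin d → ℝ), SuperGeneralPosition p →
    ∃ f : Fin n → Fin N, StrictMono f ∧ SuperOrderTypeHomogeneous (fun i => p (f i))}

/-- The tower function: `twr 1 x = x` and `twr (i+1) x = 2 ^ twr i x`. -/
def twr (k x : ℕ) : ℕ := (fun y => 2 ^ y)^[k - 1] x

/-- `t` is an `ε`-sample of the interval `[a, b]`: an increasing tuple of points of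
`[a, b]` meeting every subinterval of `[a, b]` of length `ε`. -/
def IsEpsSample (a b ε : ℝ) {n : ℕ} (t : Fin n → ℝ) : Prop :=
  StrictMono t ∧ (∀ i, t i ∈ Set.Icc a b) ∧
    ∀ x : ℝ, Set.Icc x (x + ε) ⊆ Set.Icc a b → ∃ i, t i ∈ Set.Icc x (x + ε)

/-- All `(k+1)`-element subsets of the index interval `[a, b]` have the same sign. -/
def IntervalHomog {n : ℕ} (k : ℕ) (sgn : Finset (Fin n) → Bool) (a b : Fin n) : Prop :=
  ∃ σ : Bool, ∀ s : Finset (Fin n), s.card = k + 1 → (∀ i ∈ s, a ≤ i ∧ i ≤ b) → sgn s = σ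

/-- `c 0 = 0 < c 1 < ⋯ < c m = n - 1` are the cut points of the greedy partition of the
`k`-sequence on `Fin n` with sign function `sgn` into the `m` blocks
`[c 0, c 1], [c 1, c 2], …, [c (m-1), c m]` (consecutive blocks overlap in one point):
each block has all its `(k+1)`-element subsets of the same sign, and each block is
maximal with this property (cannot be extended to the right). -/
def IsGreedyPartition {n : ℕ} (k : ℕ) (sgn : Finset (Fin n) → Bool) (m : ℕ)
    (c : Fin (m + 1) → Fin n) : Prop :=
  (c 0 : ℕ) = 0 ∧ (c (Fin.last m) : ℕ) = n - 1 ∧ StrictMono c ∧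
    (∀ j : Fin m, IntervalHomog k sgn (c j.castSucc) (c j.succ)) ∧
    (∀ j : Fin m, ∀ e : Fin n, c j.succ < e → ¬ IntervalHomog k sgn (c j.castSucc) e)

/-- A `k`-sequence is a flip `k`-sequence if for every `k`-element subset `A` of indices
the sign sequence `(sgn (insert i A) : i ∉ A)` (indices in increasing order) has at most
one sign change; for `±`-valued sequences this says there are no positions `i < j < l`
with `sgn (insert i A) ≠ sgn (insert j A)` and `sgn (insert j A) ≠ sgn (insert l A)`. -/
def FlipSeq {n : ℕ} (k : ℕ) (sgn : Finset (Fin n) → Bool) : Prop :=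
  ∀ A : Finset (Fin n), A.card = k →
    ¬ ∃ i j l : Fin n, i < j ∧ j < l ∧ i ∉ A ∧ j ∉ A ∧ l ∉ A ∧
      sgn (insert i A) ≠ sgn (insert j A) ∧ sgn (insert j A) ≠ sgn (insert l A)


theorem ramsey_fin (r : ℕ) : ∀ a b : ℕ, ∃ R : ℕ, ∀ (χ : Finset ℕ → Prop) (X : Finset ℕ), R ≤ X.card →
    (∃ H ⊆ X, H.card = a ∧ ∀ T ⊆ H, T.card = r → χ T) ∨
    (∃ H ⊆ X, H.card = b ∧ ∀ T ⊆ H, T.card = r → ¬ χ T) := by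
  induction r with
  | zero =>
    intro a b
    refine ⟨a + b, fun χ X hX => ?_⟩
    by_cases h : χ ∅
    · left
      obtain ⟨H, hH, hc⟩ := Finset.exists_subset_card_eq (show a ≤ X.card by omega)
      refine ⟨H, hH, hc, fun T _ hT => ?_⟩
      rw [Finset.card_eq_zero.1 hT]; exact h
    · right
      obtain ⟨H, hH, hc⟩ := Finset.exists_subset_card_eq (show b ≤ X.card by omega)
      refine ⟨H, hH, hc, fun T _ hT => ?_⟩
      rw [Finset.card_eq_zero.1 hT]; exact h
  | succ r ih =>
    have key : ∀ s a b : ℕ, a + b = s → ∃ R : ℕ, ∀ (χ : Finset ℕ → Prop) (X : Finset ℕ), R ≤ X.card →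
      (∃ H ⊆ X, H.card = a ∧ ∀ T ⊆ H, T.card = r + 1 → χ T) ∨
      (∃ H ⊆ X, H.card = b ∧ ∀ T ⊆ H, T.card = r + 1 → ¬ χ T) := by
      intro s
      induction s with
      | zero =>
        intro a b hab
        refine ⟨0, fun χ X _ => Or.inl ⟨∅, by simp, by simp; omega, ?_⟩⟩
        intro T hT hc
        rw [Finset.subset_empty.1 hT] at hc
        simp at hc
      | succ s ihs =>
        intro a b hab
        rcases Nat.eq_zero_or_pos a with ha | ha
        · refine ⟨0, fun χ X _ => Or.inl ⟨∅, by simp, by simp [ha], ?_⟩⟩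
          intro T hT hc
          rw [Finset.subset_empty.1 hT] at hc
          simp at hc
        rcases Nat.eq_zero_or_pos b with hb | hb
        · refine ⟨0, fun χ X _ => Or.inr ⟨∅, by simp, by simp [hb], ?_⟩⟩
          intro T hT hc
          rw [Finset.subset_empty.1 hT] at hc
          simp at hc
        obtain ⟨R1, h1⟩ := ihs (a - 1) b (by omega)
        obtain ⟨R2, h2⟩ := ihs a (b - 1) (by omega)
        obtain ⟨R, hR⟩ := ih R1 R2
        refine ⟨R + 1, fun χ X hX => ?_⟩
        obtain ⟨x, hx⟩ : X.Nonempty := Finset.card_pos.1 (by omega)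
        have aux : ∀ (P : Finset ℕ → Prop) (Y H : Finset ℕ), Y ⊆ X.erase x →
            (∀ T ⊆ Y, T.card = r → P (insert x T)) → H ⊆ Y →
            (∀ T ⊆ H, T.card = r + 1 → P T) →
            ∀ T ⊆ insert x H, T.card = r + 1 → P T := by
          intro P Y H hY hP hHY hH T hT hc
          by_cases hxT : x ∈ T
          · have := hP (T.erase x) ?_ (by rw [Finset.card_erase_of_mem hxT]; omega)
            · rwa [Finset.insert_erase hxT] at this
            · intro y hy
              rw [Finset.mem_erase] at hy
              have := hT hy.2
              rw [Finset.mem_insert] at this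
              exact hHY (this.resolve_left hy.1)
          · refine hH T ?_ hc
            intro y hy
            have := hT hy
            rw [Finset.mem_insert] at this
            exact this.resolve_left (by rintro rfl; exact hxT hy)
        rcases hR (fun U => χ (insert x U)) (X.erase x) (by rw [Finset.card_erase_of_mem hx]; omega) with
          ⟨Y, hY, hYc, hYP⟩ | ⟨Y, hY, hYc, hYP⟩
        · rcases h1 χ Y (by omega) with ⟨H, hH, hc, hP⟩ | ⟨H, hH, hc, hP⟩
          · left
            refine ⟨insert x H, ?_, ?_, aux χ Y H hY hYP hH hP⟩
            · intro y hy
              rcases Finset.mem_insert.1 hy with rfl | hy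
              · exact hx
              · exact Finset.mem_of_mem_erase (hY (hH hy))
            · rw [Finset.card_insert_of_notMem, hc]; omega
              intro h; exact Finset.notMem_erase x X (hY (hH h))
          · exact Or.inr ⟨H, fun y hy => Finset.mem_of_mem_erase (hY (hH hy)), hc, hP⟩
        · rcases h2 χ Y (by omega) with ⟨H, hH, hc, hP⟩ | ⟨H, hH, hc, hP⟩
          · exact Or.inl ⟨H, fun y hy => Finset.mem_of_mem_erase (hY (hH hy)), hc, hP⟩
          · right
            refine ⟨insert x H, ?_, ?_, aux (fun T => ¬ χ T) Y H hY hYP hH hP⟩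
            · intro y hy
              rcases Finset.mem_insert.1 hy with rfl | hy
              · exact hx
              · exact Finset.mem_of_mem_erase (hY (hH hy))
            · rw [Finset.card_insert_of_notMem, hc]; omega
              intro h; exact Finset.notMem_erase x X (hY (hH h))
    intro a b
    exact key _ a b rfl

/-- Propagation of homogeneity to everything sandwiched between elements of `H`. -/
theorem flip_prop (k : ℕ) (χ : Finset ℕ → Prop) (S H S' : Finset ℕ) (hH : H ⊆ S) (hS' : S' ⊆ S)
    (flip : ∀ A ⊆ S, A.card = k → ∀ i ∈ S, ∀ j ∈ S, ∀ l ∈ S, i < j → j < l → i ∉ A → j ∉ A → l ∉ A →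
      χ (insert i A) → χ (insert l A) → χ (insert j A))
    (hom : ∀ T ⊆ H, T.card = k + 1 → χ T)
    (hL : ∀ x ∈ S', k + 1 ≤ (H.filter (· < x)).card)
    (hR : ∀ x ∈ S', k + 1 ≤ (H.filter (x < ·)).card) :
    ∀ T ⊆ S', T.card = k + 1 → χ T := by
  have key : ∀ j : ℕ, ∀ T ⊆ H ∪ S', T.card = k + 1 → (T \ H).card = j → χ T := by
    intro j
    induction j with
    | zero =>
      intro T hT hc h0
      exact hom T (by rwa [Finset.card_eq_zero, Finset.sdiff_eq_empty_iff_subset] at h0) hc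
    | succ j ih =>
      intro T hT hc hj
      obtain ⟨x, hx⟩ : (T \ H).Nonempty := Finset.card_pos.1 (by omega)
      rw [Finset.mem_sdiff] at hx
      have hxS' : x ∈ S' := (Finset.mem_union.1 (hT hx.1)).resolve_left hx.2
      have hA : (T.erase x).card = k := by rw [Finset.card_erase_of_mem hx.1]; omega
      have hHS : H ∪ S' ⊆ S := Finset.union_subset hH hS'
      have ex : ∀ F : Finset ℕ, k + 1 ≤ F.card → ∃ y ∈ F, y ∉ T.erase x := by
        intro F hF
        by_contra hcon
        push Not at hcon
        have := Finset.card_le_card (show F ⊆ T.erase x from hcon)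
        omega
      obtain ⟨i, hi, hiA⟩ := ex _ (hL x hxS')
      obtain ⟨l, hl, hlA⟩ := ex _ (hR x hxS')
      rw [Finset.mem_filter] at hi hl
      have gen : ∀ y ∈ H, y ∉ T.erase x → χ (insert y (T.erase x)) := by
        intro y hy hyA
        apply ih
        · apply Finset.insert_subset (Finset.mem_union_left _ hy)
          exact (Finset.erase_subset _ _).trans hT
        · rw [Finset.card_insert_of_notMem hyA, hA]
        · have : insert y (T.erase x) \ H = (T \ H).erase x := by
            ext z
            simp only [Finset.mem_sdiff, Finset.mem_insert, Finset.mem_erase]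
            constructor
            · rintro ⟨rfl | h, h2⟩
              · exact absurd hy h2
              · exact ⟨h.1, h.2, h2⟩
            · rintro ⟨h1, h2, h3⟩
              exact ⟨Or.inr ⟨h1, h2⟩, h3⟩
          rw [this, Finset.card_erase_of_mem (Finset.mem_sdiff.2 hx)]; omega
      have := flip (T.erase x) ((Finset.erase_subset _ _).trans (hT.trans hHS)) hA i (hH hi.1) x
        (hS' hxS') l (hH hl.1) hi.2 hl.2 hiA (Finset.notMem_erase _ _) hlA (gen i hi.1 hiA) (gen l hl.1 hlA)
      rwa [Finset.insert_erase hx.1] at this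
  intro T hT hc
  exact key _ T (hT.trans Finset.subset_union_right) hc rfl

theorem flip_lemma (k : ℕ) : ∃ C : ℕ, 0 < C ∧ ∀ (χ : Finset ℕ → Prop) (S : Finset ℕ) (q : ℕ),
    C * q ≤ S.card →
    (∀ A ⊆ S, A.card = k → ∀ i ∈ S, ∀ j ∈ S, ∀ l ∈ S, i < j → j < l → i ∉ A → j ∉ A → l ∉ A →
      χ (insert i A) → χ (insert l A) → χ (insert j A)) →
    (∀ A ⊆ S, A.card = k → ∀ i ∈ S, ∀ j ∈ S, ∀ l ∈ S, i < j → j < l → i ∉ A → j ∉ A → l ∉ A →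
      ¬ χ (insert i A) → ¬ χ (insert l A) → ¬ χ (insert j A)) →
    ∃ S' ⊆ S, q ≤ S'.card ∧ ((∀ T ⊆ S', T.card = k + 1 → χ T) ∨ (∀ T ⊆ S', T.card = k + 1 → ¬ χ T)) := by
  obtain ⟨R, hR⟩ := ramsey_fin (k + 1) (2 * k + 3) (2 * k + 3)
  refine ⟨R + 1, by omega, fun χ S q hq f1 f2 => ?_⟩
  rcases Nat.eq_zero_or_pos q with rfl | hqpos
  · refine ⟨∅, by simp, by simp, Or.inl ?_⟩
    intro T hT hc
    rw [Finset.subset_empty.1 hT] at hc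
    simp at hc
  have hlt : ∀ i : Fin R, (i : ℕ) * q < S.card := by
    intro i
    have : (i : ℕ) * q + q ≤ R * q := by
      have := Nat.mul_le_mul_right q (show (i : ℕ) + 1 ≤ R from i.2)
      linarith
    nlinarith
  set e := S.orderEmbOfFin rfl with he
  let x : Fin R → ℕ := fun i => e ⟨(i : ℕ) * q, hlt i⟩
  have hxinj : Function.Injective x := by
    intro i j hij
    have := e.injective hij
    rw [Fin.mk.injEq] at this
    exact Fin.ext (Nat.eq_of_mul_eq_mul_right hqpos this)
  have hXS : Finset.image x Finset.univ ⊆ S := by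
    intro y hy
    obtain ⟨i, _, rfl⟩ := Finset.mem_image.1 hy
    exact Finset.orderEmbOfFin_mem _ _ _
  have main : ∀ (P : Finset ℕ → Prop) (H : Finset ℕ), H ⊆ Finset.image x Finset.univ →
      H.card = 2 * k + 3 → (∀ T ⊆ H, T.card = k + 1 → P T) →
      (∀ A ⊆ S, A.card = k → ∀ i ∈ S, ∀ j ∈ S, ∀ l ∈ S, i < j → j < l → i ∉ A → j ∉ A → l ∉ A →
      P (insert i A) → P (insert l A) → P (insert j A)) →
      ∃ S' ⊆ S, q ≤ S'.card ∧ ∀ T ⊆ S', T.card = k + 1 → P T := by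
    intro P H hHX hc hom fl
    set h := H.orderEmbOfFin hc with hh
    set a := h ⟨k + 1, by omega⟩ with ha
    set b := h ⟨k + 2, by omega⟩ with hb
    have hab : a < b := h.strictMono (by simp [Fin.lt_def])
    obtain ⟨i, _, hi⟩ := Finset.mem_image.1 (hHX (Finset.orderEmbOfFin_mem H hc ⟨k + 1, by omega⟩))
    obtain ⟨j, _, hj⟩ := Finset.mem_image.1 (hHX (Finset.orderEmbOfFin_mem H hc ⟨k + 2, by omega⟩))
    have hi' : e ⟨(i : ℕ) * q, hlt i⟩ = a := hi
    have hj' : e ⟨(j : ℕ) * q, hlt j⟩ = b := hj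
    have hij : (i : ℕ) * q + q ≤ (j : ℕ) * q := by
      rw [← hi', ← hj', e.lt_iff_lt, Fin.mk_lt_mk] at hab
      have : (i : ℕ) < j := lt_of_mul_lt_mul_right hab (Nat.zero_le _)
      nlinarith
    refine ⟨S.filter (fun y => a ≤ y ∧ y < b), Finset.filter_subset _ _, ?_, ?_⟩
    · let y : Fin q → ℕ := fun t => e ⟨(i : ℕ) * q + t, by have := t.2; have := hlt j; omega⟩
      have hyinj : Function.Injective y := by
        intro s t hst
        have := e.injective hst
        rw [Fin.mk.injEq] at this
        exact Fin.ext (by omega)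
      calc q = (Finset.image y Finset.univ).card := by
              rw [Finset.card_image_of_injective _ hyinj, Finset.card_univ, Fintype.card_fin]
        _ ≤ _ := by
          apply Finset.card_le_card
          intro z hz
          obtain ⟨t, _, rfl⟩ := Finset.mem_image.1 hz
          rw [Finset.mem_filter]
          refine ⟨Finset.orderEmbOfFin_mem _ _ _, ?_, ?_⟩
          · rw [← hi']; exact e.monotone (by simp [Fin.le_def])
          · rw [← hj']; exact e.strictMono (by have := t.2; simp only [Fin.mk_lt_mk]; omega)
    · apply flip_prop k P S H _ (hHX.trans hXS) (Finset.filter_subset _ _) fl hom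
      · intro z hz
        rw [Finset.mem_filter] at hz
        let y : Fin (k + 1) → ℕ := fun t => h ⟨t, by omega⟩
        have hyinj : Function.Injective y := by
          intro s t hst
          have := h.injective hst
          rw [Fin.mk.injEq] at this
          exact Fin.ext this
        calc k + 1 = (Finset.image y Finset.univ).card := by
              rw [Finset.card_image_of_injective _ hyinj, Finset.card_univ, Fintype.card_fin]
          _ ≤ _ := by
            apply Finset.card_le_card
            intro w hw
            obtain ⟨t, _, rfl⟩ := Finset.mem_image.1 hw
            rw [Finset.mem_filter]
            refine ⟨Finset.orderEmbOfFin_mem _ _ _, lt_of_lt_of_le ?_ hz.2.1⟩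
            exact h.strictMono (by have := t.2; simp only [Fin.mk_lt_mk]; omega)
      · intro z hz
        rw [Finset.mem_filter] at hz
        let y : Fin (k + 1) → ℕ := fun t => h ⟨k + 2 + t, by omega⟩
        have hyinj : Function.Injective y := by
          intro s t hst
          have := h.injective hst
          rw [Fin.mk.injEq] at this
          exact Fin.ext (by omega)
        calc k + 1 = (Finset.image y Finset.univ).card := by
              rw [Finset.card_image_of_injective _ hyinj, Finset.card_univ, Fintype.card_fin]
          _ ≤ _ := by
            apply Finset.card_le_card
            intro w hw
            obtain ⟨t, _, rfl⟩ := Finset.mem_image.1 hw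
            rw [Finset.mem_filter]
            refine ⟨Finset.orderEmbOfFin_mem _ _ _, lt_of_lt_of_le hz.2.2 ?_⟩
            exact h.monotone (by simp [Fin.le_def])
  have hXc : R ≤ (Finset.image x Finset.univ).card := by
    rw [Finset.card_image_of_injective _ hxinj, Finset.card_univ, Fintype.card_fin]
  rcases hR χ _ hXc with ⟨H, hH, hc, hom⟩ | ⟨H, hH, hc, hom⟩
  · obtain ⟨S', h1, h2, h3⟩ := main χ H hH hc hom f1
    exact ⟨S', h1, h2, Or.inl h3⟩
  · obtain ⟨S', h1, h2, h3⟩ := main (fun T => ¬ χ T) H hH hc hom f2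
    exact ⟨S', h1, h2, Or.inr h3⟩

/-- Determinant of the first `k` coordinates of the vectors `V (f 0), ..., V (f (k-1))`. -/
noncomputable def Dt (V : ℕ → ℕ → ℝ) (k : ℕ) (f : Fin k → ℕ) : ℝ :=
  Matrix.det (Matrix.of fun i j : Fin k => V (f j) i)

/-- The same determinant for a finite set of indices in increasing order. -/
noncomputable def DF (V : ℕ → ℕ → ℝ) (T : Finset ℕ) : ℝ := Dt V T.card (T.orderEmbOfFin rfl)

theorem DF_eq (V : ℕ → ℕ → ℝ) (T : Finset ℕ) (k : ℕ) (h : T.card = k) :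
    DF V T = Dt V k (T.orderEmbOfFin h) := by
  subst h; rfl

theorem DF_image (V : ℕ → ℕ → ℝ) (k : ℕ) (f : Fin k → ℕ) (hf : StrictMono f) :
    DF V (Finset.image f Finset.univ) = Dt V k f := by
  have hc : (Finset.image f Finset.univ).card = k := by
    rw [Finset.card_image_of_injective _ hf.injective, Finset.card_univ, Fintype.card_fin]
  rw [DF_eq V _ k hc]
  congr 1
  exact (Finset.orderEmbOfFin_unique hc (fun i => Finset.mem_image_of_mem _ (Finset.mem_univ i)) hf).symm

theorem emb_index (B : Finset ℕ) (n : ℕ) (h : B.card = n) (t : Fin n) :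
    (B.filter (· < B.orderEmbOfFin h t)).card = t := by
  have : B.filter (· < B.orderEmbOfFin h t) = Finset.image (B.orderEmbOfFin h) (Finset.Iio t) := by
    ext y
    simp only [Finset.mem_filter, Finset.mem_image, Finset.mem_Iio]
    constructor
    · rintro ⟨hy, hlt⟩
      have : y ∈ Set.range (B.orderEmbOfFin h) := by
        rw [Finset.range_orderEmbOfFin]; exact hy
      obtain ⟨s, rfl⟩ := this
      exact ⟨s, by simpa using hlt, rfl⟩
    · rintro ⟨s, hs, rfl⟩
      exact ⟨Finset.orderEmbOfFin_mem _ _ _, by simpa using hs⟩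
  rw [this, Finset.card_image_of_injective _ (B.orderEmbOfFin h).injective, Fin.card_Iio]

theorem emb_erase (B : Finset ℕ) (n : ℕ) (h : B.card = n + 1) (t : Fin (n + 1))
    (h' : (B.erase (B.orderEmbOfFin h t)).card = n) :
    (fun s => B.orderEmbOfFin h (t.succAbove s)) = (B.erase (B.orderEmbOfFin h t)).orderEmbOfFin h' := by
  apply Finset.orderEmbOfFin_unique h'
  · intro s
    rw [Finset.mem_erase]
    refine ⟨fun hh => ?_, Finset.orderEmbOfFin_mem _ _ _⟩
    exact Fin.succAbove_ne t s ((B.orderEmbOfFin h).injective hh)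
  · exact (B.orderEmbOfFin h).strictMono.comp (Fin.strictMono_succAbove t)

/-- The linear functional attached to the set `A`. -/
noncomputable def Phi (V : ℕ → ℕ → ℝ) (A : Finset ℕ) (x : ℕ) : ℝ :=
  ∑ r : Fin (A.card + 1), (-1) ^ (r : ℕ) * V x r *
    Matrix.det (Matrix.of fun i j : Fin A.card => V (A.orderEmbOfFin rfl j) (r.succAbove i))

theorem Phi_of_mem (V : ℕ → ℕ → ℝ) (A : Finset ℕ) (x : ℕ) (hx : x ∈ A) : Phi V A x = 0 := by
  have : x ∈ Set.range (A.orderEmbOfFin rfl) := by rw [Finset.range_orderEmbOfFin]; exact hx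
  obtain ⟨s, hs⟩ := this
  let M : Matrix (Fin (A.card + 1)) (Fin (A.card + 1)) ℝ :=
    Matrix.of fun i j => V ((Fin.cons x (A.orderEmbOfFin rfl) : Fin (A.card + 1) → ℕ) j) i
  have h0 : M.det = 0 := by
    apply Matrix.det_zero_of_column_eq (i := 0) (j := s.succ) (Fin.succ_ne_zero s).symm
    intro r
    simp [M, hs]
  rw [Matrix.det_succ_column_zero] at h0
  rw [← h0, Phi]
  rfl

theorem DF_insert (V : ℕ → ℕ → ℝ) (A : Finset ℕ) (x : ℕ) (hx : x ∉ A) :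
    DF V (insert x A) = (-1) ^ (A.filter (· < x)).card * Phi V A x := by
  have hc : (insert x A).card = A.card + 1 := Finset.card_insert_of_notMem hx
  rw [DF_eq V _ _ hc]
  have : x ∈ Set.range ((insert x A).orderEmbOfFin hc) := by
    rw [Finset.range_orderEmbOfFin]; simp
  obtain ⟨t, ht⟩ := this
  have hidx := emb_index (insert x A) _ hc t
  rw [ht, Finset.filter_insert, if_neg (lt_irrefl _)] at hidx
  have hE : (insert x A).erase ((insert x A).orderEmbOfFin hc t) = A := by
    rw [ht, Finset.erase_insert hx]
  have he := emb_erase (insert x A) _ hc t (by rw [hE])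
  have he' : (fun s => (insert x A).orderEmbOfFin hc (t.succAbove s)) = A.orderEmbOfFin rfl := by
    rw [he]; congr 2
  unfold Dt
  rw [Matrix.det_succ_column _ t, hidx, Phi, Finset.mul_sum]
  refine Finset.sum_congr rfl fun r _ => ?_
  have e2 : (Matrix.of fun i j => V ((insert x A).orderEmbOfFin hc j) ↑i : Matrix (Fin (A.card+1)) (Fin (A.card+1)) ℝ).submatrix r.succAbove t.succAbove
    = Matrix.of fun i j : Fin A.card => V (A.orderEmbOfFin rfl j) (r.succAbove i) := by
    ext i j
    simp only [Matrix.submatrix_apply, Matrix.of_apply]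
    rw [← he']
  rw [e2]
  simp only [Matrix.of_apply, ht]
  ring

theorem dependency (V : ℕ → ℕ → ℝ) (B : Finset ℕ) (n : ℕ) (hB : B.card = n + 1) (r : ℕ) (hr : r < n) :
    ∑ b ∈ B, (-1) ^ (B.filter (· < b)).card * V b r * DF V (B.erase b) = 0 := by
  have hsum : ∑ b ∈ B, (-1 : ℝ) ^ (B.filter (· < b)).card * V b r * DF V (B.erase b) =
      ∑ t : Fin (n + 1), (-1 : ℝ) ^ (B.filter (· < B.orderEmbOfFin hB t)).card * V (B.orderEmbOfFin hB t) r
        * DF V (B.erase (B.orderEmbOfFin hB t)) := by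
    rw [← Finset.sum_image (f := fun b => (-1 : ℝ) ^ (B.filter (· < b)).card * V b r * DF V (B.erase b))
      (g := B.orderEmbOfFin hB) (s := Finset.univ) (fun a _ b _ h => (B.orderEmbOfFin hB).injective h)]
    congr 1
    exact (Finset.image_orderEmbOfFin_univ B hB).symm
  rw [hsum]
  let M : Matrix (Fin (n + 1)) (Fin (n + 1)) ℝ :=
    Matrix.of fun i j => V (B.orderEmbOfFin hB j) ((Fin.cons r (fun s : Fin n => (s : ℕ)) : Fin (n + 1) → ℕ) i)
  have h0 : M.det = 0 := by
    apply Matrix.det_zero_of_row_eq (i := 0) (j := (⟨r, hr⟩ : Fin n).succ) (Fin.succ_ne_zero _).symm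
    ext j
    simp only [M, Matrix.of_apply, Fin.cons_zero, Fin.cons_succ]
  rw [Matrix.det_succ_row_zero] at h0
  rw [← h0]
  refine Finset.sum_congr rfl fun t _ => ?_
  have hc : (B.erase (B.orderEmbOfFin hB t)).card = n := by
    rw [Finset.card_erase_of_mem (Finset.orderEmbOfFin_mem _ _ _), hB]; omega
  rw [emb_index, DF_eq V _ n hc, ← emb_erase B n hB t hc]
  rfl

/-- The three-term relation. -/
theorem three_term (V : ℕ → ℕ → ℝ) (A : Finset ℕ) (i j l : ℕ) (hij : i < j) (hjl : j < l)
    (hi : i ∉ A) (hj : j ∉ A) (hl : l ∉ A) :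
    DF V ((insert i (insert j (insert l A))).erase i) * DF V (insert i A)
    - DF V ((insert i (insert j (insert l A))).erase j) * DF V (insert j A)
    + DF V ((insert i (insert j (insert l A))).erase l) * DF V (insert l A) = 0 := by
  set B := insert i (insert j (insert l A)) with hBdef
  have hl1 : l ∉ A := hl
  have hj1 : j ∉ insert l A := by simp [hj]; omega
  have hi1 : i ∉ insert j (insert l A) := by simp [hi]; omega
  have hB : B.card = (A.card + 2) + 1 := by
    rw [hBdef, Finset.card_insert_of_notMem hi1, Finset.card_insert_of_notMem hj1,
      Finset.card_insert_of_notMem hl1]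
  have h0 : ∑ b ∈ B, (-1) ^ (B.filter (· < b)).card * Phi V A b * DF V (B.erase b) = 0 := by
    have : ∀ b ∈ B, (-1) ^ (B.filter (· < b)).card * Phi V A b * DF V (B.erase b) =
      ∑ r : Fin (A.card + 1), ((-1) ^ (r : ℕ) *
        Matrix.det (Matrix.of fun i j : Fin A.card => V (A.orderEmbOfFin rfl j) (r.succAbove i))) *
        ((-1) ^ (B.filter (· < b)).card * V b r * DF V (B.erase b)) := by
      intro b _
      rw [Phi, Finset.mul_sum, Finset.sum_mul]
      refine Finset.sum_congr rfl fun r _ => ?_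
      ring
    rw [Finset.sum_congr rfl this, Finset.sum_comm]
    refine Finset.sum_eq_zero fun r _ => ?_
    rw [← Finset.mul_sum, dependency V B _ hB r (by omega), mul_zero]
  have hA0 : ∑ b ∈ A, (-1) ^ (B.filter (· < b)).card * Phi V A b * DF V (B.erase b) = 0 :=
    Finset.sum_eq_zero fun b hb => by rw [Phi_of_mem V A b hb]; ring
  have hsplit : ∀ F : ℕ → ℝ, ∑ b ∈ B, F b = F i + (F j + (F l + ∑ b ∈ A, F b)) := by
    intro F
    rw [hBdef, Finset.sum_insert hi1, Finset.sum_insert hj1, Finset.sum_insert hl1]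
  rw [hsplit, hA0] at h0
  have ci : (B.filter (· < i)).card = (A.filter (· < i)).card := by
    congr 1
    ext y; simp only [hBdef, Finset.mem_filter, Finset.mem_insert]
    constructor
    · rintro ⟨rfl | rfl | rfl | h, h2⟩
      · omega
      · omega
      · omega
      · exact ⟨h, h2⟩
    · rintro ⟨h, h2⟩; exact ⟨Or.inr (Or.inr (Or.inr h)), h2⟩
  have cj : (B.filter (· < j)).card = (A.filter (· < j)).card + 1 := by
    rw [← Finset.card_insert_of_notMem (s := A.filter (· < j)) (a := i) (by simp [hi])]
    congr 1
    ext y; simp only [hBdef, Finset.mem_filter, Finset.mem_insert]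
    constructor
    · rintro ⟨rfl | rfl | rfl | h, h2⟩
      · exact Or.inl rfl
      · omega
      · omega
      · exact Or.inr ⟨h, h2⟩
    · rintro (rfl | ⟨h, h2⟩)
      · exact ⟨Or.inl rfl, hij⟩
      · exact ⟨Or.inr (Or.inr (Or.inr h)), h2⟩
  have cl : (B.filter (· < l)).card = (A.filter (· < l)).card + 2 := by
    have e1 : j ∉ A.filter (· < l) := by simp [hj]
    have e2 : i ∉ insert j (A.filter (· < l)) := by simp [hi]; omega
    have : (insert i (insert j (A.filter (· < l)))).card = (A.filter (· < l)).card + 2 := by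
      rw [Finset.card_insert_of_notMem e2, Finset.card_insert_of_notMem e1]
    rw [← this]
    congr 1
    ext y; simp only [hBdef, Finset.mem_filter, Finset.mem_insert]
    constructor
    · rintro ⟨rfl | rfl | rfl | h, h2⟩
      · exact Or.inl rfl
      · exact Or.inr (Or.inl rfl)
      · omega
      · exact Or.inr (Or.inr ⟨h, h2⟩)
    · rintro (rfl | rfl | ⟨h, h2⟩)
      · exact ⟨Or.inl rfl, hij.trans hjl⟩
      · exact ⟨Or.inr (Or.inl rfl), hjl⟩
      · exact ⟨Or.inr (Or.inr (Or.inr h)), h2⟩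
  rw [ci, cj, cl] at h0
  rw [DF_insert V A i hi, DF_insert V A j hj, DF_insert V A l hl]
  rw [pow_add, pow_add] at h0
  linear_combination h0

/-- All increasing `k`-tuples in `S` have the same (nonzero) sign. -/
def HomS (V : ℕ → ℕ → ℝ) (k : ℕ) (S : Finset ℕ) : Prop :=
  (∀ T ⊆ S, T.card = k → 0 < DF V T) ∨ (∀ T ⊆ S, T.card = k → DF V T < 0)

theorem HomS.mono {V : ℕ → ℕ → ℝ} {k : ℕ} {S S' : Finset ℕ} (h : HomS V k S) (hS : S' ⊆ S) :
    HomS V k S' := by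
  rcases h with h | h
  · exact Or.inl fun T hT => h T (hT.trans hS)
  · exact Or.inr fun T hT => h T (hT.trans hS)

theorem proj_step (k : ℕ) : ∃ C : ℕ, 0 < C ∧ ∀ (V : ℕ → ℕ → ℝ) (S : Finset ℕ) (q : ℕ),
    C * q ≤ S.card → (∀ T ⊆ S, T.card = k + 1 → DF V T ≠ 0) → HomS V (k + 2) S →
    ∃ S' ⊆ S, q ≤ S'.card ∧ HomS V (k + 1) S' := by
  obtain ⟨C, hC, h⟩ := flip_lemma k
  refine ⟨C, hC, fun V S q hq hnd hom => ?_⟩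
  have key : ∀ A ⊆ S, A.card = k → ∀ i ∈ S, ∀ j ∈ S, ∀ l ∈ S, i < j → j < l → i ∉ A → j ∉ A → l ∉ A →
      ∃ a b c : ℝ, 0 < a ∧ 0 < b ∧ 0 < c ∧
        a * DF V (insert i A) - b * DF V (insert j A) + c * DF V (insert l A) = 0 := by
    intro A hA hAc i hi j hj l hl hij hjl hiA hjA hlA
    have h3 := three_term V A i j l hij hjl hiA hjA hlA
    set B := insert i (insert j (insert l A)) with hBdef
    have hl1 : l ∉ A := hlA
    have hj1 : j ∉ insert l A := by simp [hjA]; omega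
    have hi1 : i ∉ insert j (insert l A) := by simp [hiA]; omega
    have hB : B.card = k + 3 := by
      rw [hBdef, Finset.card_insert_of_notMem hi1, Finset.card_insert_of_notMem hj1,
        Finset.card_insert_of_notMem hl1, hAc]
    have hBS : B ⊆ S := by
      rw [hBdef]
      exact Finset.insert_subset hi (Finset.insert_subset hj (Finset.insert_subset hl hA))
    have hsub : ∀ x ∈ B, B.erase x ⊆ S ∧ (B.erase x).card = k + 2 := by
      intro x hx
      exact ⟨(Finset.erase_subset _ _).trans hBS, by rw [Finset.card_erase_of_mem hx]; omega⟩
    have hiB := hsub i (by simp [hBdef])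
    have hjB := hsub j (by simp [hBdef])
    have hlB := hsub l (by simp [hBdef])
    rcases hom with hom | hom
    · exact ⟨_, _, _, hom _ hiB.1 hiB.2, hom _ hjB.1 hjB.2, hom _ hlB.1 hlB.2, h3⟩
    · refine ⟨_, _, _, neg_pos.2 (hom _ hiB.1 hiB.2), neg_pos.2 (hom _ hjB.1 hjB.2),
        neg_pos.2 (hom _ hlB.1 hlB.2), ?_⟩
      linear_combination -h3
  have hmain := h (fun T => 0 < DF V T) S q hq (by
    intro A hA hAc i hi j hj l hl hij hjl hiA hjA hlA h1 h2
    obtain ⟨a, b, c, ha, hb, hc, he⟩ := key A hA hAc i hi j hj l hl hij hjl hiA hjA hlA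
    have := mul_pos ha h1
    have := mul_pos hc h2
    exact pos_of_mul_pos_right (by linarith : 0 < b * DF V (insert j A)) hb.le) (by
    intro A hA hAc i hi j hj l hl hij hjl hiA hjA hlA h1 h2 h3
    obtain ⟨a, b, c, ha, hb, hc, he⟩ := key A hA hAc i hi j hj l hl hij hjl hiA hjA hlA
    have := mul_nonpos_of_nonneg_of_nonpos ha.le (not_lt.1 h1)
    have := mul_nonpos_of_nonneg_of_nonpos hc.le (not_lt.1 h2)
    have := mul_pos hb h3
    linarith)
  obtain ⟨S', hS', hq', hh⟩ := hmain
  refine ⟨S', hS', hq', ?_⟩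
  rcases hh with hh | hh
  · exact Or.inl hh
  · right
    intro T hT hc
    exact lt_of_le_of_ne (not_lt.1 (hh T hT hc)) (hnd T (hT.trans hS') hc)

theorem proj_all (K : ℕ) : ∃ C : ℕ, 0 < C ∧ ∀ (V : ℕ → ℕ → ℝ) (S : Finset ℕ) (q : ℕ),
    C * q ≤ S.card → (∀ T ⊆ S, T.card ≤ K + 1 → DF V T ≠ 0) → HomS V (K + 1) S →
    ∃ S' ⊆ S, q ≤ S'.card ∧ ∀ k, 1 ≤ k → k ≤ K + 1 → HomS V k S' := by
  induction K with
  | zero =>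
    refine ⟨1, one_pos, fun V S q hq _ hom => ⟨S, subset_rfl, by omega, fun k h1 h2 => ?_⟩⟩
    obtain rfl : k = 1 := by omega
    exact hom
  | succ K ih =>
    obtain ⟨C1, hC1, h1⟩ := ih
    obtain ⟨C2, hC2, h2⟩ := proj_step K
    refine ⟨C2 * C1, Nat.mul_pos hC2 hC1, fun V S q hq hnd hom => ?_⟩
    obtain ⟨S', hS', hq', hom'⟩ := h2 V S (C1 * q) (by rw [← mul_assoc]; exact hq)
      (fun T hT hc => hnd T hT (by omega)) hom
    obtain ⟨S'', hS'', hq'', hom''⟩ := h1 V S' q hq' (fun T hT hc => hnd T (hT.trans hS') (by omega)) hom'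
    refine ⟨S'', hS''.trans hS', hq'', fun k hk1 hk2 => ?_⟩
    rcases Nat.lt_or_ge k (K + 2) with h | h
    · exact hom'' k hk1 (by omega)
    · obtain rfl : k = K + 1 + 1 := by omega
      exact hom.mono (hS''.trans hS')
/-- All increasing `k`-tuples of the sequence `s 0, ..., s (m-1)` have the same sign. -/
def HomSeq (V : ℕ → ℕ → ℝ) (k : ℕ) (s : ℕ → ℕ) (m : ℕ) : Prop :=
  ∃ σ : ℝ, ∀ f : Fin k → ℕ, StrictMono f → (∀ i, f i < m) → 0 < σ * Dt V k (fun i => s (f i))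

/-- There is a nondegenerate configuration of `N` vectors without super-homogeneous subsequences
of length `m`. -/
def Good (K N m : ℕ) : Prop :=
  ∃ V : ℕ → ℕ → ℝ, (∀ a, V a 0 = 1) ∧
    (∀ k ≤ K, ∀ f : Fin k → ℕ, StrictMono f → (∀ i, f i < N) → Dt V k f ≠ 0) ∧
    (∀ a b, a < b → b < N → V a 1 < V b 1) ∧
    ∀ s : ℕ → ℕ, (∀ i j, i < j → j < m → s i < s j) → (∀ i < m, s i < N) →
      ¬ ∀ k, 1 ≤ k → k ≤ K → HomSeq V k s m

/-- `l` is the most significant bit in which `a < b` differ. -/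
def Dl (a b l : ℕ) : Prop :=
  a.testBit l = false ∧ b.testBit l = true ∧ ∀ j, l < j → a.testBit j = b.testBit j

theorem Dl_exists {a b : ℕ} (h : a < b) : ∃ l, Dl a b l := by
  have hne : a ^^^ b ≠ 0 := by
    intro h0
    have := Nat.xor_eq_zero_iff.1 h0
    omega
  obtain ⟨l, hl, hl2⟩ := Nat.exists_most_significant_bit hne
  have hgt : ∀ j, l < j → a.testBit j = b.testBit j := by
    intro j hj
    have := hl2 j hj
    rw [Nat.testBit_xor] at this
    revert this
    cases a.testBit j <;> cases b.testBit j <;> simp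
  rw [Nat.testBit_xor] at hl
  refine ⟨l, ?_⟩
  cases ha : a.testBit l <;> cases hb : b.testBit l
  · simp [ha, hb] at hl
  · exact ⟨ha, hb, hgt⟩
  · exfalso
    have := Nat.lt_of_testBit l hb ha (fun j hj => (hgt j hj).symm)
    omega
  · simp [ha, hb] at hl

theorem Dl_ne {a b c l l' : ℕ} (h : Dl a b l) (h' : Dl b c l') : l ≠ l' := by
  rintro rfl
  have h1 := h.2.1
  have h2 := h'.1
  rw [h1] at h2
  exact absurd h2 (by simp)

theorem Dl_trans_lt {a b c l l' : ℕ} (h : Dl a b l) (h' : Dl b c l') (hl : l < l') : Dl a c l' :=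
  ⟨by rw [h.2.2 l' hl]; exact h'.1, h'.2.1, fun j hj => by rw [h.2.2 j (by omega), h'.2.2 j hj]⟩

theorem Dl_trans_gt {a b c l l' : ℕ} (h : Dl a b l) (h' : Dl b c l') (hl : l' < l) : Dl a c l :=
  ⟨h.1, by rw [← h'.2.2 l hl]; exact h.2.1, fun j hj => by rw [h.2.2 j (by omega), h'.2.2 j (by omega)]⟩

theorem Dl_lt {a b l N : ℕ} (h : Dl a b l) (hb : b < 2 ^ N) : l < N := by
  have := Nat.ge_two_pow_of_testBit h.2.1
  exact (Nat.pow_lt_pow_iff_right (by norm_num)).1 (lt_of_le_of_lt this hb)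

noncomputable def bt (a l : ℕ) : ℝ := if a.testBit l then 1 else 0

/-- The stepped-up configuration. -/
noncomputable def stepV (V : ℕ → ℕ → ℝ) (N : ℕ) (ε : ℝ) (a : ℕ) : ℕ → ℝ
  | 0 => 1
  | i + 1 => ∑ l ∈ Finset.range N, bt a l * ε ^ (N - l) * V l i

/-- Rescaled difference. -/
noncomputable def Wd (V : ℕ → ℕ → ℝ) (a b δ : ℕ) (ε : ℝ) (i : ℕ) : ℝ :=
  V δ i + ∑ l ∈ Finset.range δ, (bt b l - bt a l) * ε ^ (δ - l) * V l i

theorem det_diff (V : ℕ → ℕ → ℝ) (hV : ∀ a, V a 0 = 1) (k : ℕ) (a : Fin (k + 1) → ℕ) :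
    Dt V (k + 1) a =
      Matrix.det (Matrix.of fun i j : Fin k => V (a j.succ) (i + 1) - V (a j.castSucc) (i + 1)) := by
  let A : Matrix (Fin (k + 1)) (Fin (k + 1)) ℝ := Matrix.of fun i j => V (a j) i
  let B : Matrix (Fin (k + 1)) (Fin (k + 1)) ℝ := Matrix.of fun i j =>
    (Fin.cons (V (a 0) i) (fun j : Fin k => V (a j.succ) i - V (a j.castSucc) i) : Fin (k + 1) → ℝ) j
  have h1 : A.det = B.det := by
    apply Matrix.det_eq_of_forall_col_eq_smul_add_pred (fun _ => 1)
    · intro i; simp [A, B]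
    · intro i j; simp [A, B]
  have : Dt V (k + 1) a = A.det := rfl
  rw [this, h1, Matrix.det_succ_row_zero, Fin.sum_univ_succ]
  have h2 : ∀ j : Fin k, B 0 j.succ = 0 := by
    intro j; simp [B, hV]
  simp only [h2]
  have h3 : B 0 0 = 1 := by simp [B, hV]
  simp only [h3, mul_zero, zero_mul, Finset.sum_const_zero, add_zero, Fin.val_zero, pow_zero, one_mul]
  congr 1

theorem stepV_diff (V : ℕ → ℕ → ℝ) (N : ℕ) (ε : ℝ) (a b δ i : ℕ) (h : Dl a b δ) (hδ : δ < N) :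
    stepV V N ε b (i + 1) - stepV V N ε a (i + 1) = ε ^ (N - δ) * Wd V a b δ ε i := by
  simp only [stepV]
  rw [← Finset.sum_sub_distrib]
  have h1 : ∑ l ∈ Finset.range N, (bt b l * ε ^ (N - l) * V l i - bt a l * ε ^ (N - l) * V l i) =
      ∑ l ∈ Finset.range (δ + 1), (bt b l * ε ^ (N - l) * V l i - bt a l * ε ^ (N - l) * V l i) := by
    symm
    apply Finset.sum_subset
    · intro l hl; rw [Finset.mem_range] at *; omega
    · intro l _ hl
      rw [Finset.mem_range] at hl
      have : bt a l = bt b l := by unfold bt; rw [h.2.2 l (by omega)]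
      rw [this]; ring
  rw [h1, Finset.sum_range_succ, Wd, mul_add, Finset.mul_sum, add_comm]
  congr 1
  · have ha : bt a δ = 0 := by simp [bt, h.1]
    have hb : bt b δ = 1 := by simp [bt, h.2.1]
    rw [ha, hb]; ring
  · refine Finset.sum_congr rfl fun l hl => ?_
    rw [Finset.mem_range] at hl
    have : N - l = (N - δ) + (δ - l) := by omega
    rw [this, pow_add]; ring

theorem stepV_det (V : ℕ → ℕ → ℝ) (N : ℕ) (ε : ℝ) (k : ℕ) (a : Fin (k + 1) → ℕ) (e : Fin k → ℕ)
    (h : ∀ j, Dl (a j.castSucc) (a j.succ) (e j)) (he : ∀ j, e j < N) :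
    Dt (stepV V N ε) (k + 1) a = (∏ j, ε ^ (N - e j)) *
      Matrix.det (Matrix.of fun i j : Fin k => Wd V (a j.castSucc) (a j.succ) (e j) ε i) := by
  rw [det_diff _ (fun a => rfl), ← Matrix.det_mul_row]
  congr 1
  ext i j
  simp only [Matrix.of_apply]
  exact stepV_diff V N ε _ _ _ _ (h j) (he j)

theorem Wd_det_ev (V : ℕ → ℕ → ℝ) (k : ℕ) (a : Fin (k + 1) → ℕ) (e : Fin k → ℕ) (h0 : Dt V k e ≠ 0) :
    ∀ᶠ ε in nhds (0 : ℝ), 0 < Matrix.det (Matrix.of fun i j : Fin k =>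
      Wd V (a j.castSucc) (a j.succ) (e j) ε i) * Dt V k e := by
  have hcont : Continuous (fun ε : ℝ => Matrix.det (Matrix.of fun i j : Fin k =>
      Wd V (a j.castSucc) (a j.succ) (e j) ε i) * Dt V k e) := by
    apply Continuous.mul _ continuous_const
    apply Continuous.matrix_det
    refine continuous_matrix fun i j => ?_
    simp only [Matrix.of_apply, Wd]
    fun_prop
  apply hcont.continuousAt.eventually (lt_mem_nhds _)
  have : (Matrix.of fun i j : Fin k => Wd V (a j.castSucc) (a j.succ) (e j) 0 i) =
      Matrix.of fun i j : Fin k => V (e j) i := by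
    ext i j
    simp only [Matrix.of_apply, Wd]
    rw [Finset.sum_eq_zero, add_zero]
    intro l hl
    rw [Finset.mem_range] at hl
    rw [zero_pow (by omega)]; ring
  beta_reduce
  rw [this]
  exact mul_self_pos.2 h0

theorem eps_exists (V : ℕ → ℕ → ℝ) (N K : ℕ) : ∃ ε : ℝ, ∀ k ≤ K, ∀ (a : Fin (k + 1) → ℕ) (e : Fin k → ℕ),
    (∀ i, a i < 2 ^ N) → (∀ j, Dl (a j.castSucc) (a j.succ) (e j)) → Dt V k e ≠ 0 →
    0 < Dt (stepV V N ε) (k + 1) a * Dt V k e := by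
  have h1 : ∀ᶠ ε in nhdsWithin (0 : ℝ) (Set.Ioi 0), ∀ (k : Fin (K + 1)) (a : Fin (k + 1) → Fin (2 ^ N))
      (e : Fin k → Fin N), Dt V k (fun j => e j) ≠ 0 →
      0 < Matrix.det (Matrix.of fun i j : Fin k =>
        Wd V (a j.castSucc) (a j.succ) (e j) ε i) * Dt V k (fun j => e j) := by
    refine Filter.Eventually.filter_mono nhdsWithin_le_nhds ?_
    rw [Filter.eventually_all]; intro k
    rw [Filter.eventually_all]; intro a
    rw [Filter.eventually_all]; intro e
    by_cases h0 : Dt V k (fun j => e j) = 0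
    · exact Filter.Eventually.of_forall fun _ h => absurd h0 h
    · filter_upwards [Wd_det_ev V k (fun j => (a j : ℕ)) (fun j => (e j : ℕ)) h0] with ε hε _
      exact hε
  obtain ⟨ε, h, hε⟩ := (h1.and self_mem_nhdsWithin).exists
  have hε0 : 0 < ε := hε
  refine ⟨ε, fun k hk a e ha hae h0 => ?_⟩
  have he : ∀ j, e j < N := fun j => Dl_lt (hae j) (ha _)
  rw [stepV_det V N ε k a e hae he, mul_assoc]
  apply mul_pos
  · exact Finset.prod_pos fun j _ => pow_pos hε0 _
  · exact h ⟨k, by omega⟩ (fun i => ⟨a i, ha i⟩) (fun j => ⟨e j, he j⟩) h0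

theorem moment_ne (k : ℕ) (f : Fin k → ℕ) (hf : Function.Injective f) :
    Dt (fun a i => (a : ℝ) ^ i) k f ≠ 0 := by
  have : (Matrix.of fun i j : Fin k => ((f j : ℕ) : ℝ) ^ (i : ℕ)) =
      (Matrix.vandermonde (fun j => (f j : ℝ))).transpose := by
    ext i j; simp [Matrix.vandermonde_apply]
  unfold Dt
  rw [this, Matrix.det_transpose]
  exact Matrix.det_vandermonde_ne_zero_iff.2 (fun i j h => hf (by exact_mod_cast h))

theorem perturb (V : ℕ → ℕ → ℝ) (hV : ∀ a, V a 0 = 1) (M K : ℕ) : ∃ V2 : ℕ → ℕ → ℝ, (∀ a, V2 a 0 = 1) ∧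
    ∀ k ≤ K, ∀ f : Fin k → ℕ, (∀ i, f i < M) →
      (Dt V k f ≠ 0 → 0 < Dt V2 k f * Dt V k f) ∧ (Function.Injective f → Dt V2 k f ≠ 0) := by
  let U : ℝ → ℕ → ℕ → ℝ := fun η a i => (1 - η) * V a i + η * (a : ℝ) ^ i
  have hcont : ∀ k (f : Fin k → ℕ), Continuous fun η => Dt (U η) k f := by
    intro k f
    apply Continuous.matrix_det
    refine continuous_matrix fun i j => ?_
    simp only [Matrix.of_apply, U]
    fun_prop
  have hU0 : U 0 = V := by funext a i; simp [U]
  have hU1 : U 1 = fun (a : ℕ) (i : ℕ) => (a : ℝ) ^ i := by funext a i; simp [U]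
  have h1 : ∀ k (f : Fin k → ℕ), Dt V k f ≠ 0 → ∀ᶠ η in nhds (0 : ℝ), 0 < Dt (U η) k f * Dt V k f := by
    intro k f h0
    apply ((hcont k f).mul continuous_const).continuousAt.eventually (lt_mem_nhds _)
    simp only [Pi.mul_apply]
    rw [hU0]; exact mul_self_pos.2 h0
  have h2 : ∀ k (f : Fin k → ℕ), Function.Injective f →
      ∀ᶠ η in nhdsWithin (0 : ℝ) (Set.Ioi 0), Dt (U η) k f ≠ 0 := by
    intro k f hf
    let P : Polynomial ℝ := Matrix.det (Matrix.of fun i j : Fin k =>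
      (1 - Polynomial.X) * Polynomial.C (V (f j) i) + Polynomial.X * Polynomial.C ((f j : ℝ) ^ (i : ℕ)))
    have hP : ∀ η, P.eval η = Dt (U η) k f := by
      intro η
      have := RingHom.map_det (Polynomial.evalRingHom η) (Matrix.of fun i j : Fin k =>
        (1 - Polynomial.X) * Polynomial.C (V (f j) i) + Polynomial.X * Polynomial.C ((f j : ℝ) ^ (i : ℕ)))
      rw [Polynomial.coe_evalRingHom] at this
      rw [show P.eval η = _ from this]
      unfold Dt
      congr 1
      ext i j
      simp [U]
    have hP0 : P ≠ 0 := by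
      intro h
      have := hP 1
      rw [h, hU1] at this
      simp only [Polynomial.eval_zero] at this
      exact moment_ne k f hf this.symm
    have hfin : (P.roots.toFinset : Set ℝ).Finite := Finset.finite_toSet _
    have hcl : ∀ᶠ η in nhdsWithin (0 : ℝ) (Set.Ioi 0), η ∉ ((P.roots.toFinset : Set ℝ) \ {0}) := by
      apply nhdsWithin_le_nhds
      apply (hfin.subset Set.sdiff_subset).isClosed.isOpen_compl.mem_nhds
      simp
    filter_upwards [hcl, self_mem_nhdsWithin] with η hη hpos h0
    apply hη
    refine ⟨?_, ?_⟩
    · rw [Finset.mem_coe, Multiset.mem_toFinset, Polynomial.mem_roots hP0, Polynomial.IsRoot, hP]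
      exact h0
    · exact ne_of_gt hpos
  have h3 : ∀ᶠ η in nhdsWithin (0 : ℝ) (Set.Ioi 0), ∀ (k : Fin (K + 1)) (f : Fin k → Fin M),
      (Dt V k (fun i => f i) ≠ 0 → 0 < Dt (U η) k (fun i => f i) * Dt V k (fun i => f i)) ∧
      (Function.Injective (fun i => (f i : ℕ)) → Dt (U η) k (fun i => f i) ≠ 0) := by
    rw [Filter.eventually_all]; intro k
    rw [Filter.eventually_all]; intro f
    apply Filter.Eventually.and
    · by_cases h0 : Dt V k (fun i => f i) = 0
      · exact Filter.Eventually.of_forall fun _ h => absurd h0 h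
      · filter_upwards [nhdsWithin_le_nhds (h1 k _ h0)] with η hη _
        exact hη
    · by_cases h0 : Function.Injective (fun i => (f i : ℕ))
      · filter_upwards [h2 k _ h0] with η hη _
        exact hη
      · exact Filter.Eventually.of_forall fun _ h => absurd h h0
  obtain ⟨η, hη⟩ := h3.exists
  refine ⟨U η, fun a => by simp [U, hV], fun k hk f hf => ?_⟩
  exact hη ⟨k, by omega⟩ (fun i => ⟨f i, hf i⟩)

theorem good_base (N : ℕ) : Good 2 N (N + 1) := by
  refine ⟨fun a i => (a : ℝ) ^ i, fun a => by simp, ?_, ?_, ?_⟩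
  · intro k _ f hf _
    exact moment_ne k f hf.injective
  · intro a b hab _
    simpa using hab
  · intro s hs hsN _
    have : ∀ i, i < N + 1 → i ≤ s i := by
      intro i
      induction i with
      | zero => intro _; omega
      | succ i ih =>
        intro hi
        have := hs i (i + 1) (by omega) hi
        have := ih (by omega)
        omega
    have h1 := this N (by omega)
    have h2 := hsN N (by omega)
    omega

theorem Dt_two (V : ℕ → ℕ → ℝ) (hV : ∀ a, V a 0 = 1) (f : Fin 2 → ℕ) :
    Dt V 2 f = V (f 1) 1 - V (f 0) 1 := by
  unfold Dt
  rw [Matrix.det_fin_two]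
  simp [hV]

theorem Dt_one (V : ℕ → ℕ → ℝ) (hV : ∀ a, V a 0 = 1) (f : Fin 1 → ℕ) : Dt V 1 f = 1 := by
  unfold Dt
  simp [hV]

theorem good_step (K N m : ℕ) (hK : 2 ≤ K) (h : Good K N m) : Good (K + 1) (2 ^ N) (m + 1) := by
  obtain ⟨V, hV0, hnd, hinc, hno⟩ := h
  obtain ⟨ε, hε⟩ := eps_exists V N K
  obtain ⟨V2, hV20, hV2⟩ := perturb (stepV V N ε) (fun a => rfl) (2 ^ N) (K + 1)
  -- main sign property
  have hsign : ∀ k ≤ K, ∀ (a : Fin (k + 1) → ℕ) (e : Fin k → ℕ),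
      (∀ i, a i < 2 ^ N) → (∀ j, Dl (a j.castSucc) (a j.succ) (e j)) → Dt V k e ≠ 0 →
      0 < Dt V2 (k + 1) a * Dt V k e := by
    intro k hk a e ha hae h0
    have h1 := hε k hk a e ha hae h0
    have h2 := (hV2 (k + 1) (by omega) a ha).1 (by rintro h; rw [h, zero_mul] at h1; exact lt_irrefl _ h1)
    have h3 := mul_pos h1 h2
    have h4 : 0 < Dt (stepV V N ε) (k + 1) a ^ 2 * (Dt V2 (k + 1) a * Dt V k e) := by nlinarith
    exact pos_of_mul_pos_right h4 (sq_nonneg _)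
  refine ⟨V2, hV20, ?_, ?_, ?_⟩
  · intro k hk f hf hfN
    exact (hV2 k hk f hfN).2 hf.injective
  · intro a b hab hb
    obtain ⟨l, hl⟩ := Dl_exists hab
    have := hsign 1 (by omega) ![a, b] (fun _ => l) (by intro i; fin_cases i <;> simp <;> omega)
      (by intro j; fin_cases j; simpa using hl) (by rw [Dt_one V hV0]; norm_num)
    rw [Dt_one V hV0, Dt_two V2 hV20] at this
    simp at this
    exact this
  · intro s hs hsN hom
    have hex : ∀ j, ∃ l, j < m → Dl (s j) (s (j + 1)) l := by
      intro j
      by_cases hj : j < m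
      · obtain ⟨l, hl⟩ := Dl_exists (hs j (j + 1) (by omega) (by omega))
        exact ⟨l, fun _ => hl⟩
      · exact ⟨0, fun h => absurd h hj⟩
    choose t ht using hex
    have htN : ∀ j < m, t j < N := fun j hj => Dl_lt (ht j hj) (hsN _ (by omega))
    -- consecutive triples
    obtain ⟨σ, hσ⟩ := hom 3 (by omega) (by omega)
    have hcons : ∀ j, j + 1 < m → 0 < σ * (V (t (j + 1)) 1 - V (t j) 1) := by
      intro j hj
      have hne : t j ≠ t (j + 1) := Dl_ne (ht j (by omega)) (ht (j + 1) hj)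
      have hne' : V (t (j + 1)) 1 - V (t j) 1 ≠ 0 := by
        rcases lt_or_gt_of_ne hne with h | h
        · have := hinc _ _ h (htN _ hj); linarith
        · have := hinc _ _ h (htN j (by omega)); linarith
      have h1 := hσ ![j, j + 1, j + 2] (by
        intro x y hxy; fin_cases x <;> fin_cases y <;> simp at hxy ⊢) (by
        intro x; fin_cases x <;> simp <;> omega)
      have h2 := hsign 2 hK (fun i => s (![j, j + 1, j + 2] i)) ![t j, t (j + 1)] (by
        intro i; apply hsN; fin_cases i <;> simp <;> omega) (by
        intro i; fin_cases i
        · exact ht j (by omega)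
        · exact ht (j + 1) hj) (by rw [Dt_two V hV0]; simpa using hne')
      rw [Dt_two V hV0] at h2
      simp only [Matrix.cons_val_one, Matrix.cons_val_zero] at h2
      have h3 := mul_pos h1 h2
      set D := Dt V2 3 (fun i => s (![j, j + 1, j + 2] i))
      have h4 : 0 < D ^ 2 * (σ * (V (t (j + 1)) 1 - V (t j) 1)) := by
        have : D ^ 2 * (σ * (V (t (j + 1)) 1 - V (t j) 1)) =
          σ * D * (D * (V (t (j + 1)) 1 - V (t j) 1)) := by ring
        rw [this]; exact h3
      exact pos_of_mul_pos_right h4 (sq_nonneg _)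
    rcases le_or_gt 0 σ with hs0 | hs0
    · -- increasing
      have hinc1 : ∀ j, j + 1 < m → t j < t (j + 1) := by
        intro j hj
        have h1 := hcons j hj
        by_contra hcon
        rcases Nat.lt_or_ge (t (j + 1)) (t j) with h | h
        · have := hinc _ _ h (htN j (by omega))
          nlinarith
        · have : t j = t (j + 1) := by omega
          rw [this] at h1; simp at h1
      have hD : ∀ i n, i + n < m → Dl (s i) (s (i + n + 1)) (t (i + n)) := by
        intro i n
        induction n with
        | zero => intro h; exact ht i h
        | succ n ih =>
          intro h
          exact Dl_trans_lt (ih (by omega)) (ht (i + n + 1) h) (hinc1 (i + n) h)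
      have hmono : ∀ i j, i < j → j < m → t i < t j := by
        intro i j hij
        induction j, hij using Nat.le_induction with
        | base => intro h; exact hinc1 i h
        | succ j hj ih => intro h; exact (ih (by omega)).trans (hinc1 j h)
      refine hno t hmono htN fun k hk1 hk2 => ?_
      obtain ⟨τ, hτ⟩ := hom (k + 1) (by omega) (by omega)
      refine ⟨τ, fun f hf hfm => ?_⟩
      have hmonoe : StrictMono (fun i => t (f i)) := fun x y hxy => hmono _ _ (hf hxy) (hfm y)
      let g : Fin (k + 1) → ℕ := Fin.cons 0 (fun i => f i + 1)
      have hg : StrictMono g := by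
        rw [Fin.strictMono_iff_lt_succ]
        intro i
        rcases Nat.eq_zero_or_pos (i : ℕ) with h0 | h0
        · have : i.castSucc = 0 := by ext; simpa using h0
          rw [this]
          simp [g]
        · obtain ⟨i', hi'⟩ : ∃ i' : Fin k, i.castSucc = i'.succ ∧ i' < i :=
            ⟨⟨i - 1, by omega⟩, by ext; simp; omega, by rw [Fin.lt_def]; simp; omega⟩
          rw [hi'.1]
          simp only [g, Fin.cons_succ]
          have := hf hi'.2
          omega
      have hgm : ∀ i, g i < m + 1 := by
        intro i
        refine Fin.cases ?_ (fun i' => ?_) i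
        · simp [g]
        · simp only [g, Fin.cons_succ]; have := hfm i'; omega
      have hDl : ∀ j : Fin k, Dl (s (g j.castSucc)) (s (g j.succ)) (t (f j)) := by
        intro j
        have h1 : g j.castSucc < g j.succ := hg (Fin.castSucc_lt_succ)
        have h2 : g j.succ = f j + 1 := by simp [g]
        have := hD (g j.castSucc) (f j - g j.castSucc) (by have := hfm j; omega)
        rw [h2]
        rwa [show g j.castSucc + (f j - g j.castSucc) = f j by omega] at this
      have h1 := hτ g hg hgm
      have h2 := hsign k hk2 (fun i => s (g i)) (fun i => t (f i)) (fun i => hsN _ (hgm i)) hDl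
        (hnd k hk2 _ hmonoe (fun i => htN _ (hfm i)))
      have h3 := mul_pos h1 h2
      set D := Dt V2 (k + 1) (fun i => s (g i))
      have h4 : 0 < D ^ 2 * (τ * Dt V k (fun i => t (f i))) := by
        have : D ^ 2 * (τ * Dt V k (fun i => t (f i))) = τ * D * (D * Dt V k (fun i => t (f i))) := by ring
        rw [this]; exact h3
      exact pos_of_mul_pos_right h4 (sq_nonneg _)
    · -- decreasing
      have hdec1 : ∀ j, j + 1 < m → t (j + 1) < t j := by
        intro j hj
        have h1 := hcons j hj
        by_contra hcon
        rcases Nat.lt_or_ge (t j) (t (j + 1)) with h | h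
        · have := hinc _ _ h (htN (j + 1) (by omega))
          nlinarith
        · have : t j = t (j + 1) := by omega
          rw [this] at h1; simp at h1
      have hmono : ∀ i j, i < j → j < m → t j < t i := by
        intro i j hij
        induction j, hij using Nat.le_induction with
        | base => intro h; exact hdec1 i h
        | succ j hj ih => intro h; exact (hdec1 j h).trans (ih (by omega))
      have hD : ∀ i n, i + n < m → Dl (s i) (s (i + n + 1)) (t i) := by
        intro i n
        induction n with
        | zero => intro h; exact ht i h
        | succ n ih =>
          intro h
          exact Dl_trans_gt (ih (by omega)) (ht (i + n + 1) h) (hmono i _ (by omega) h)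
      refine hno (fun j => t (m - 1 - j)) (fun i j hij hj => hmono _ _ (by omega) (by omega))
        (fun i hi => htN _ (by omega)) fun k hk1 hk2 => ?_
      obtain ⟨τ, hτ⟩ := hom (k + 1) (by omega) (by omega)
      refine ⟨τ * ((Equiv.Perm.sign (Fin.revPerm : Equiv.Perm (Fin k)) : ℤ) : ℝ), fun f hf hfm => ?_⟩
      let f' : Fin k → ℕ := fun i => m - 1 - f (Fin.rev i)
      have hf' : StrictMono f' := by
        intro x y hxy
        have := hf (Fin.rev_lt_rev.2 hxy)
        have := hfm (Fin.rev x)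
        simp only [f']; omega
      have hfm' : ∀ i, f' i < m := by
        intro i
        have := hfm (Fin.rev i)
        simp only [f']; omega
      have hmonoe : StrictMono (fun i => t (m - 1 - f i)) := fun x y hxy =>
        hmono _ _ (by have := hf hxy; have := hfm y; omega) (by have := hfm x; omega)
      have hrev : Dt V k (fun i => t (f' i)) =
          ((Equiv.Perm.sign (Fin.revPerm : Equiv.Perm (Fin k)) : ℤ) : ℝ) * Dt V k (fun i => t (m - 1 - f i)) := by
        unfold Dt
        rw [← Matrix.det_permute']
        rfl
      let g : Fin (k + 1) → ℕ := Fin.snoc f' m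
      have hgc : ∀ i : Fin k, g i.castSucc = f' i := fun i => by simp [g]
      have hgl : g (Fin.last k) = m := by simp [g]
      have hg : StrictMono g := by
        intro x y hxy
        obtain ⟨x', rfl⟩ : ∃ x' : Fin k, x'.castSucc = x :=
          ⟨x.castPred (ne_of_lt (lt_of_lt_of_le hxy (Fin.le_last y))), by simp⟩
        rw [hgc]
        rcases Fin.eq_castSucc_or_eq_last y with ⟨y', rfl⟩ | rfl
        · rw [hgc]; exact hf' (by simpa using hxy)
        · rw [hgl]; exact hfm' _
      have hgm : ∀ i, g i < m + 1 := by
        intro i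
        rcases Fin.eq_castSucc_or_eq_last i with ⟨y', rfl⟩ | rfl
        · rw [hgc]; have := hfm' y'; omega
        · rw [hgl]; omega
      have hDl : ∀ j : Fin k, Dl (s (g j.castSucc)) (s (g j.succ)) (t (f' j)) := by
        intro j
        have h1 : g j.castSucc < g j.succ := hg (Fin.castSucc_lt_succ)
        have h3 := hgm j.succ
        have := hD (g j.castSucc) (g j.succ - g j.castSucc - 1) (by omega)
        rw [show g j.castSucc + (g j.succ - g j.castSucc - 1) + 1 = g j.succ by omega] at this
        rw [← hgc]
        exact this
      have h1 := hτ g hg hgm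
      have h0 := hnd k hk2 _ hmonoe (fun i => htN _ (by have := hfm i; omega))
      have h0' : Dt V k (fun i => t (f' i)) ≠ 0 := by
        rw [hrev]
        refine mul_ne_zero ?_ h0
        simp
      have h2 := hsign k hk2 (fun i => s (g i)) (fun i => t (f' i)) (fun i => hsN _ (hgm i)) hDl h0'
      have h3 := mul_pos h1 h2
      set D := Dt V2 (k + 1) (fun i => s (g i))
      have h4 : 0 < D ^ 2 * (τ * Dt V k (fun i => t (f' i))) := by
        have : D ^ 2 * (τ * Dt V k (fun i => t (f' i))) = τ * D * (D * Dt V k (fun i => t (f' i))) := by ring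
        rw [this]; exact h3
      have h5 := pos_of_mul_pos_right h4 (sq_nonneg _)
      rw [hrev, ← mul_assoc] at h5
      exact h5

theorem twr_succ (d x : ℕ) (hd : 1 ≤ d) : twr (d + 1) x = 2 ^ twr d x := by
  obtain ⟨e, rfl⟩ : ∃ e, d = e + 1 := ⟨d - 1, by omega⟩
  simp only [twr, Nat.add_sub_cancel]
  rw [Function.iterate_succ_apply']

theorem good_all (x d : ℕ) (hd : 1 ≤ d) : Good (d + 1) (twr d x) (x + d) := by
  induction d, hd using Nat.le_induction with
  | base => exact good_base x
  | succ d hd ih =>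
    rw [twr_succ d x hd]
    exact good_step (d + 1) _ _ (by omega) ih

theorem affInd_of_det (d k : ℕ) (hk : k ≤ d + 1) (V : ℕ → ℕ → ℝ) (hV : ∀ a, V a 0 = 1) (f : Fin k → ℕ)
    (h : Dt V k f ≠ 0) : AffineIndependent ℝ (fun (j : Fin k) (i : Fin d) => V (f j) (i + 1)) := by
  rw [affineIndependent_iff]
  intro t w₀ hw0 hw j hj
  let w : Fin k → ℝ := fun l => if l ∈ t then w₀ l else 0
  have hwsum : ∀ g : Fin k → ℝ, ∑ l, g l * w l = ∑ l ∈ t, w₀ l * g l := by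
    intro g
    simp [w, Finset.sum_ite_mem, mul_comm]
  have hz : (Matrix.of fun i j : Fin k => V (f j) i).mulVec w = 0 := by
    ext i
    simp only [Matrix.mulVec, dotProduct, Matrix.of_apply, Pi.zero_apply]
    rcases Nat.eq_zero_or_pos (i : ℕ) with h0 | h0
    · rw [hwsum]; simp only [h0, hV, mul_one]; exact hw0
    · have := congrFun hw ⟨(i : ℕ) - 1, by omega⟩
      simp only [Finset.sum_apply, Pi.smul_apply, smul_eq_mul, Pi.zero_apply] at this
      rw [hwsum, ← this]
      refine Finset.sum_congr rfl fun l _ => ?_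
      rw [show (i : ℕ) - 1 + 1 = i by omega]
  have := congrFun (Matrix.eq_zero_of_mulVec_eq_zero h hz) j
  simpa [w, hj] using this

theorem det_of_affInd (d : ℕ) (q : Fin (d + 1) → (Fin d → ℝ)) (h : AffineIndependent ℝ q) :
    Matrix.det (Matrix.of fun i j : Fin (d + 1) => (Fin.cons (1 : ℝ) (q j) : Fin (d + 1) → ℝ) i) ≠ 0 := by
  intro h0
  obtain ⟨w, hw, hz⟩ := Matrix.exists_mulVec_eq_zero_iff.2 h0
  apply hw
  rw [affineIndependent_iff] at h
  have h1 : ∑ j, w j = 0 := by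
    have := congrFun hz 0
    simpa [Matrix.mulVec, dotProduct] using this
  have h2 : ∑ j, w j • q j = 0 := by
    ext i
    have := congrFun hz i.succ
    simp only [Matrix.mulVec, dotProduct, Matrix.of_apply, Fin.cons_succ, Pi.zero_apply] at this
    simp only [Finset.sum_apply, Pi.smul_apply, smul_eq_mul, Pi.zero_apply]
    rw [← this]
    exact Finset.sum_congr rfl fun l _ => mul_comm _ _
  funext j
  exact h Finset.univ w h1 h2 j (Finset.mem_univ _)

theorem otSign_eq (d : ℕ) (V : ℕ → ℕ → ℝ) (hV : ∀ a, V a 0 = 1) (f : Fin (d + 1) → ℕ) :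
    otSign (fun (j : Fin (d + 1)) (i : Fin d) => V (f j) (i + 1)) = Real.sign (Dt V (d + 1) f) := by
  unfold otSign Dt
  congr 2
  ext i j
  simp only [Matrix.of_apply]
  refine Fin.cases ?_ (fun i' => ?_) i
  · simp [hV]
  · simp

theorem HomSeq_of_HomS (V : ℕ → ℕ → ℝ) (k : ℕ) (S : Finset ℕ) (m : ℕ) (s : ℕ → ℕ)
    (hs : ∀ i j, i < j → j < m → s i < s j) (hsS : ∀ i < m, s i ∈ S) (h : HomS V k S) : HomSeq V k s m := by
  have key : ∀ f : Fin k → ℕ, StrictMono f → (∀ i, f i < m) →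
      ∃ T ⊆ S, T.card = k ∧ DF V T = Dt V k (fun i => s (f i)) := by
    intro f hf hfm
    have hsm : StrictMono (fun i => s (f i)) := fun x y hxy => hs _ _ (hf hxy) (hfm y)
    refine ⟨Finset.image (fun i => s (f i)) Finset.univ, ?_, ?_, DF_image V k _ hsm⟩
    · intro y hy
      obtain ⟨i, _, rfl⟩ := Finset.mem_image.1 hy
      exact hsS _ (hfm i)
    · rw [Finset.card_image_of_injective _ hsm.injective, Finset.card_univ, Fintype.card_fin]
  rcases h with h | h
  · refine ⟨1, fun f hf hfm => ?_⟩
    obtain ⟨T, hT, hc, he⟩ := key f hf hfm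
    rw [← he, one_mul]; exact h T hT hc
  · refine ⟨-1, fun f hf hfm => ?_⟩
    obtain ⟨T, hT, hc, he⟩ := key f hf hfm
    rw [← he]; have := h T hT hc; linarith

theorem seq_of_finset (S : Finset ℕ) (q : ℕ) (hq : q ≤ S.card) : ∃ s : ℕ → ℕ,
    (∀ i j, i < j → j < q → s i < s j) ∧ ∀ i < q, s i ∈ S := by
  refine ⟨fun i => if h : i < S.card then S.orderEmbOfFin rfl ⟨i, h⟩ else 0, ?_, ?_⟩
  · intro i j hij hj
    beta_reduce
    rw [dif_pos (show i < S.card by omega), dif_pos (show j < S.card by omega)]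
    exact (S.orderEmbOfFin rfl).strictMono (by simpa using hij)
  · intro i hi
    beta_reduce
    rw [dif_pos (show i < S.card by omega)]
    exact Finset.orderEmbOfFin_mem _ _ _

theorem real_sign_pos {x : ℝ} (h : 0 < Real.sign x) : 0 < x := by
  rcases lt_trichotomy x 0 with hx | hx | hx
  · rw [Real.sign_of_neg hx] at h; norm_num at h
  · rw [hx, Real.sign_zero] at h; norm_num at h
  · exact hx

theorem real_sign_neg {x : ℝ} (h : Real.sign x < 0) : x < 0 := by
  rcases lt_trichotomy x 0 with hx | hx | hx
  · exact hx
  · rw [hx, Real.sign_zero] at h; norm_num at h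
  · rw [Real.sign_of_pos hx] at h; norm_num at h

theorem construction (d : ℕ) (hd : 1 ≤ d) : ∃ C : ℕ, 0 < C ∧ ∀ n x M : ℕ, C * (x + d) ≤ n → M ≤ twr d x →
    ∃ p : Fin M → (Fin d → ℝ), GeneralPosition p ∧
      ¬ ∃ f : Fin n → Fin M, StrictMono f ∧ OrderTypeHomogeneous (fun i => p (f i)) := by
  obtain ⟨C, hC, hproj⟩ := proj_all d
  refine ⟨C, hC, fun n x M hn hM => ?_⟩
  obtain ⟨V, hV, hnd, -, hno⟩ := good_all x d hd
  refine ⟨fun a i => V a (i + 1), ?_, ?_⟩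
  · intro s hs
    have hsm : StrictMono (fun j : Fin s.card => ((s.orderIsoOfFin rfl j : Fin M) : ℕ)) := by
      intro a b hab
      exact (s.orderIsoOfFin rfl).strictMono hab
    have h1 := affInd_of_det d s.card hs V hV _ (hnd s.card hs _ hsm
      (fun i => lt_of_lt_of_le (Fin.is_lt _) hM))
    rw [← affineIndependent_equiv (s.orderIsoOfFin rfl).toEquiv]
    exact h1
  · rintro ⟨f, hf, σ, hσ, hom⟩
    have hfS : StrictMono (fun i => (f i : ℕ)) := fun a b hab => hf hab
    set S : Finset ℕ := Finset.image (fun i => (f i : ℕ)) Finset.univ with hS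
    have hSc : S.card = n := by
      rw [hS, Finset.card_image_of_injective _ hfS.injective, Finset.card_univ, Fintype.card_fin]
    have hSN : ∀ y ∈ S, y < twr d x := by
      intro y hy
      obtain ⟨i, _, rfl⟩ := Finset.mem_image.1 hy
      exact lt_of_lt_of_le (f i).2 hM
    have hsgn : ∀ T ⊆ S, T.card = d + 1 → Real.sign (DF V T) = σ := by
      intro T hT hc
      have hex : ∀ j : Fin (d + 1), ∃ i : Fin n, (f i : ℕ) = T.orderEmbOfFin hc j := by
        intro j
        obtain ⟨i, _, hi⟩ := Finset.mem_image.1 (hT (Finset.orderEmbOfFin_mem T hc j))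
        exact ⟨i, hi⟩
      choose g hg using hex
      have hgm : StrictMono g := by
        intro a b hab
        have := (T.orderEmbOfFin hc).strictMono hab
        rw [← hg a, ← hg b] at this
        exact hfS.lt_iff_lt.1 this
      have h1 := hom g hgm
      rw [DF_eq V T _ hc, ← otSign_eq d V hV, ← h1]
      simp only [hg]
    have hHom : HomS V (d + 1) S := by
      rcases lt_or_gt_of_ne hσ with h | h
      · right
        intro T hT hc
        exact real_sign_neg (by rw [hsgn T hT hc]; exact h)
      · left
        intro T hT hc
        exact real_sign_pos (by rw [hsgn T hT hc]; exact h)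
    obtain ⟨S', hS', hq, hall⟩ := hproj V S (x + d) (by omega) (by
      intro T hT hc
      exact hnd _ hc _ (T.orderEmbOfFin rfl).strictMono
        (fun i => hSN _ (hT (Finset.orderEmbOfFin_mem _ _ _)))) hHom
    obtain ⟨s, hs1, hs2⟩ := seq_of_finset S' (x + d) hq
    exact hno s hs1 (fun i hi => hSN _ (hS' (hs2 i hi)))
      (fun k h1 h2 => HomSeq_of_HomS V k S' _ s hs1 hs2 (hall k h1 h2))

theorem OT_nonempty (d n : ℕ) : ∃ N : ℕ, ∀ p : Fin N → (Fin d → ℝ), GeneralPosition p →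
    ∃ f : Fin n → Fin N, StrictMono f ∧ OrderTypeHomogeneous (fun i => p (f i)) := by
  obtain ⟨R, hR⟩ := ramsey_fin (d + 1) n n
  refine ⟨R, fun p hp => ?_⟩
  have hdet : ∀ g : Fin (d + 1) → Fin R, StrictMono g → Matrix.det (Matrix.of fun i j : Fin (d + 1) =>
      (Fin.cons (1 : ℝ) (p (g j)) : Fin (d + 1) → ℝ) i) ≠ 0 := by
    intro g hg
    apply det_of_affInd
    have hc : (Finset.image g Finset.univ).card ≤ d + 1 := by
      rw [Finset.card_image_of_injective _ hg.injective, Finset.card_univ, Fintype.card_fin]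
    have := (hp _ hc).comp_embedding
      (⟨fun j => ⟨g j, Finset.mem_image_of_mem _ (Finset.mem_univ j)⟩, fun a b h => hg.injective (by
        simpa using h)⟩ : Fin (d + 1) ↪ (Finset.image g Finset.univ))
    exact this
  let χ : Finset ℕ → Prop := fun T => ∃ g : Fin (d + 1) → Fin R, StrictMono g ∧
    T = Finset.image (fun i => (g i : ℕ)) Finset.univ ∧ otSign (fun j => p (g j)) = 1
  have huniq : ∀ g g' : Fin (d + 1) → Fin R, StrictMono g → StrictMono g' →
      Finset.image (fun i => (g i : ℕ)) Finset.univ = Finset.image (fun i => (g' i : ℕ)) Finset.univ →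
      g = g' := by
    intro g g' hg hg' h
    have h1 : StrictMono (fun i => (g i : ℕ)) := fun a b hab => hg hab
    have h2 : StrictMono (fun i => (g' i : ℕ)) := fun a b hab => hg' hab
    have hr : Set.range (fun i => (g i : ℕ)) = Set.range (fun i => (g' i : ℕ)) := by
      have := congrArg (fun s : Finset ℕ => (s : Set ℕ)) h
      simpa using this
    have := (StrictMono.range_inj h1 h2).1 hr
    funext i
    exact Fin.ext (congrFun this i)
  have main : ∀ H ⊆ Finset.range R, H.card = n → ∃ f : Fin n → Fin R, StrictMono f ∧
      ∀ g : Fin (d + 1) → Fin n, StrictMono g →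
        Finset.image (fun i => (f (g i) : ℕ)) Finset.univ ⊆ H ∧
        (Finset.image (fun i => (f (g i) : ℕ)) Finset.univ).card = d + 1 := by
    intro H hH hc
    refine ⟨fun i => ⟨H.orderEmbOfFin hc i, Finset.mem_range.1 (hH (Finset.orderEmbOfFin_mem _ _ _))⟩,
      fun a b hab => (H.orderEmbOfFin hc).strictMono hab, fun g hg => ⟨?_, ?_⟩⟩
    · intro y hy
      obtain ⟨i, _, rfl⟩ := Finset.mem_image.1 hy
      exact Finset.orderEmbOfFin_mem _ _ _
    · have : Function.Injective (fun i => H.orderEmbOfFin hc (g i)) :=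
        (H.orderEmbOfFin hc).injective.comp hg.injective
      rw [Finset.card_image_of_injective _ this, Finset.card_univ, Fintype.card_fin]
  rcases hR χ (Finset.range R) (by simp) with ⟨H, hH, hc, hom⟩ | ⟨H, hH, hc, hom⟩
  · obtain ⟨f, hf, hfg⟩ := main H hH hc
    refine ⟨f, hf, 1, one_ne_zero, fun g hg => ?_⟩
    obtain ⟨g', hg', heq, h1⟩ := hom _ (hfg g hg).1 (hfg g hg).2
    have := huniq (fun i => f (g i)) g' (hf.comp hg) hg' heq
    rw [← this] at h1
    exact h1
  · obtain ⟨f, hf, hfg⟩ := main H hH hc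
    refine ⟨f, hf, -1, by norm_num, fun g hg => ?_⟩
    have hno := hom _ (hfg g hg).1 (hfg g hg).2
    have hd := hdet (fun i => f (g i)) (hf.comp hg)
    rcases Real.sign_apply_eq_of_ne_zero _ hd with h | h
    · exact h
    · exact absurd ⟨fun i => f (g i), hf.comp hg, rfl, h⟩ hno

/-- For every `d ≥ 2` there is a constant `c > 0` such that for all
sufficiently large `n` we have `OT_d(n) ≥ twr_d(⌈c·n⌉)`; equivalently, there is a sequence
of `twr_d(⌈c·n⌉) - 1` points in general position in `ℝ^d` with no order-type homogeneous
subsequence of length `n`. -/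
theorem OT_lower_bound :
    ∀ d : ℕ, 2 ≤ d → ∃ c : ℝ, 0 < c ∧ ∃ n₀ : ℕ, ∀ n : ℕ, n₀ ≤ n →
      twr d ⌈c * (n : ℝ)⌉₊ ≤ OTNum d n ∧
      ∃ p : Fin (twr d ⌈c * (n : ℝ)⌉₊ - 1) → (Fin d → ℝ), GeneralPosition p ∧
        ¬ ∃ f : Fin n → Fin (twr d ⌈c * (n : ℝ)⌉₊ - 1), StrictMono f ∧
            OrderTypeHomogeneous (fun i => p (f i)) := by
  intro d hd
  obtain ⟨C, hC, hcon⟩ := construction d (by omega)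
  have hCR : (0 : ℝ) < C := by exact_mod_cast hC
  refine ⟨1 / (2 * C), by positivity, 2 * C * (d + 1), fun n hn => ?_⟩
  set x := ⌈1 / (2 * (C : ℝ)) * (n : ℝ)⌉₊ with hx
  have hx1 : (x : ℝ) < 1 / (2 * (C : ℝ)) * (n : ℝ) + 1 := Nat.ceil_lt_add_one (by positivity)
  have hx2 : C * (x + d) ≤ n := by
    have hn' : 2 * (C : ℝ) * (d + 1) ≤ n := by exact_mod_cast hn
    have h1 : (C : ℝ) * x ≤ n / 2 + C := by
      calc (C : ℝ) * x ≤ C * (1 / (2 * (C : ℝ)) * (n : ℝ) + 1) := mul_le_mul_of_nonneg_left hx1.le hCR.le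
        _ = n / 2 + C := by field_simp
    have : (C : ℝ) * (x + d) ≤ n := by nlinarith
    exact_mod_cast this
  refine ⟨?_, hcon n x _ hx2 (Nat.sub_le _ _)⟩
  apply le_csInf
  · exact OT_nonempty d n
  · intro N hN
    by_contra hlt
    obtain ⟨p, hp, hno⟩ := hcon n x N hx2 (by omega)
    exact hno (hN p hp)
end

section
/- Let k ≥ 2 and let c ≥ 1 be such that the greedy partition of every flip (k−1)-sequence has at most c blocks. Then the greedy partition of every flip k-sequence has at most 1 + (4k+10)c/k blocks. -/
open Set

/-- Existence of a greedy partition starting from any index. -/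
theorem exists_greedy_from {N k : ℕ} (hk : 1 ≤ k) (sgn : Finset (Fin N) → Bool) :
    ∀ (r : ℕ) (a : Fin N), N - 1 - (a : ℕ) = r →
      ∃ (m : ℕ) (c : Fin (m + 1) → Fin N), c 0 = a ∧ (c (Fin.last m) : ℕ) = N - 1 ∧
        StrictMono c ∧
        (∀ j : Fin m, IntervalHomog k sgn (c j.castSucc) (c j.succ)) ∧
        (∀ j : Fin m, ∀ e : Fin N, c j.succ < e → ¬ IntervalHomog k sgn (c j.castSucc) e) := by
  intro r
  induction r using Nat.strong_induction_on with
  | _ r ih =>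
    intro a ha
    by_cases hr : r = 0
    · refine ⟨0, fun _ => a, rfl, ?_, ?_, fun j => j.elim0, fun j => j.elim0⟩
      · have := a.isLt
        simp only
        omega
      · intro i j hij
        have hij' : (i : ℕ) < j := hij
        omega
    · classical
      have hlt : (a : ℕ) + 1 < N := by omega
      let b : Fin N := ⟨(a : ℕ) + 1, hlt⟩
      have hab : IntervalHomog k sgn a b := by
        refine ⟨sgn {a, b}, fun s hs hsub => ?_⟩
        have hss : s ⊆ {a, b} := by
          intro i hi
          obtain ⟨h1, h2⟩ := hsub i hi
          simp only [Finset.mem_insert, Finset.mem_singleton, Fin.ext_iff]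
          have h1' : (a : ℕ) ≤ i := h1
          have h2' : (i : ℕ) ≤ a + 1 := h2
          show (i : ℕ) = a ∨ (i : ℕ) = a + 1
          omega
        have hc : ({a, b} : Finset (Fin N)).card ≤ s.card := by
          have := Finset.card_le_two (a := a) (b := b)
          omega
        rw [Finset.eq_of_subset_of_card_le hss hc]
      let H : Finset (Fin N) := Finset.univ.filter (fun e => IntervalHomog k sgn a e)
      have hbH : b ∈ H := by simp [H, hab]
      have hne : H.Nonempty := ⟨b, hbH⟩
      obtain ⟨e, heH, hmax⟩ := H.exists_max_image (fun e => e) hne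
      have hbe : b ≤ e := hmax b hbH
      have hbe' : (a : ℕ) + 1 ≤ e := hbe
      have hae : a < e := by
        show (a : ℕ) < e
        omega
      have he := e.isLt
      obtain ⟨m, c, h0, hl, hmono, hhom, hgr⟩ := ih (N - 1 - (e : ℕ)) (by omega) e rfl
      refine ⟨m + 1, Fin.cons a c, rfl, ?_, ?_, ?_, ?_⟩
      · rw [← Fin.succ_last, Fin.cons_succ]
        exact hl
      · rw [Fin.strictMono_iff_lt_succ]
        intro i
        refine Fin.cases ?_ (fun j => ?_) i
        · simp only [Fin.castSucc_zero, Fin.cons_zero, Fin.cons_succ]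
          rw [h0]
          exact hae
        · rw [Fin.cons_succ, Fin.castSucc_succ, Fin.cons_succ]
          exact hmono Fin.castSucc_lt_succ
      · intro i
        refine Fin.cases ?_ (fun j => ?_) i
        · simp only [Fin.castSucc_zero, Fin.cons_zero, Fin.cons_succ]
          rw [h0]
          exact (Finset.mem_filter.mp heH).2
        · rw [Fin.cons_succ, Fin.castSucc_succ, Fin.cons_succ]
          exact hhom j
      · intro i
        refine Fin.cases ?_ (fun j => ?_) i
        · simp only [Fin.castSucc_zero, Fin.cons_zero, Fin.cons_succ]
          rw [h0]
          intro f hf hh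
          have : f ≤ e := hmax f (by simp [H, hh])
          exact absurd hf (not_lt.mpr this)
        · rw [Fin.cons_succ, Fin.castSucc_succ, Fin.cons_succ]
          exact hgr j

/-- Non-homogeneous intervals with disjoint interiors are at most as many as inner cuts. -/
theorem card_nonhomog_le {N k m P : ℕ} (hk : 1 ≤ k) (sgn : Finset (Fin N) → Bool)
    (c : Fin (m + 1) → Fin N) (hc : IsGreedyPartition k sgn m c)
    (p q : Fin P → Fin N) (hn : ∀ t, ¬ IntervalHomog k sgn (p t) (q t))
    (hd : ∀ t t' : Fin P, t < t' → (q t : ℕ) ≤ p t' + 1) : P ≤ m - 1 := by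
  classical
  obtain ⟨h0, hl, hmono, hhom, -⟩ := hc
  have key : ∀ t : Fin P, ∃ i : Fin (m + 1), 0 < (i : ℕ) ∧ (i : ℕ) < m ∧ p t < c i ∧ c i < q t := by
    intro t
    have hpq : p t < q t := by
      by_contra hle
      apply hn t
      refine ⟨true, fun s hs hsub => ?_⟩
      exfalso
      have hss : s ⊆ {p t} := by
        intro i hi
        obtain ⟨h1, h2⟩ := hsub i hi
        rw [Finset.mem_singleton]
        exact le_antisymm (h2.trans (not_lt.mp hle)) h1
      have := Finset.card_le_card hss
      rw [Finset.card_singleton] at this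
      omega
    have hpq' : (p t : ℕ) < q t := hpq
    have hql := (q t).isLt
    let H : Finset (Fin (m + 1)) := Finset.univ.filter (fun i => p t < c i)
    have hlast : Fin.last m ∈ H := by
      simp only [H, Finset.mem_filter, Finset.mem_univ, true_and, Fin.lt_def]
      omega
    obtain ⟨i, hiH, hmin⟩ := H.exists_min_image (fun i => i) ⟨_, hlast⟩
    have hpi : p t < c i := (Finset.mem_filter.mp hiH).2
    have hpi' : (p t : ℕ) < c i := hpi
    have hi0 : i ≠ 0 := by
      rintro rfl
      omega
    obtain ⟨j, rfl⟩ := Fin.exists_succ_eq.mpr hi0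
    have hj : c j.castSucc ≤ p t := by
      by_contra hlt
      have hm := hmin j.castSucc (by simp only [H, Finset.mem_filter, Finset.mem_univ, true_and]; exact not_le.mp hlt)
      exact absurd hm (not_le.mpr Fin.castSucc_lt_succ)
    have hiq : c j.succ < q t := by
      by_contra hle
      obtain ⟨σ, hσ⟩ := hhom j
      exact hn t ⟨σ, fun s hs hsub => hσ s hs fun i hi =>
        ⟨hj.trans (hsub i hi).1, (hsub i hi).2.trans (not_lt.mp hle)⟩⟩
    refine ⟨j.succ, by simp, ?_, hpi, hiq⟩
    by_contra hge
    have : j.succ = Fin.last m := by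
      apply Fin.ext
      have := j.succ.isLt
      simp only [Fin.val_last]
      omega
    rw [this] at hiq
    have hiq' : (c (Fin.last m) : ℕ) < q t := hiq
    omega
  choose f hf0 hfm hfp hfq using key
  have hle : (Finset.univ : Finset (Fin P)).card ≤ (Finset.Ioo 0 m).card := by
    apply Finset.card_le_card_of_injOn (fun t => (f t : ℕ))
    · intro t _
      simp only [Finset.coe_Ioo, Set.mem_Ioo]
      exact ⟨hf0 t, hfm t⟩
    · have aux : ∀ t t' : Fin P, t < t' → (f t : ℕ) ≠ f t' := by
        intro t t' htt h
        have h' : f t = f t' := Fin.ext h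
        have h1 : (c (f t) : ℕ) < q t := hfq t
        have h2 : (p t' : ℕ) < c (f t') := hfp t'
        have h3 := hd t t' htt
        rw [← h'] at h2
        omega
      intro t _ t' _ h
      rcases lt_trichotomy t t' with h1 | h1 | h1
      · exact absurd h (aux _ _ h1)
      · exact h1
      · exact absurd h.symm (aux _ _ h1)
  simpa using hle

/-- Moving elements to the right preserves a sign different from the sign on the left. -/
theorem move_right {n k : ℕ} (sgn : Finset (Fin n) → Bool) (hF : FlipSeq k sgn)
    (x p q : Fin n) (hx : x < p) (σ : Bool)
    (hσ : ∀ B : Finset (Fin n), B.card = k → (∀ i ∈ B, p ≤ i ∧ i ≤ q) → sgn (insert x B) = σ)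
    (T₂ : Finset (Fin n)) (hT₂ : T₂.card = k + 1) (hs₂ : ∀ i ∈ T₂, p ≤ i ∧ i ≤ q) :
    ∀ (r : ℕ) (T₁ : Finset (Fin n)), (T₁ \ T₂).card = r → T₁.card = k + 1 →
      (∀ i ∈ T₁, p ≤ i ∧ i ≤ q) → (∀ a ∈ T₁, a ∉ T₂ → ∀ b ∈ T₂, b ∉ T₁ → a < b) →
      sgn T₁ ≠ σ → sgn T₂ ≠ σ := by
  intro r
  induction r with
  | zero =>
    intro T₁ h0 hc _ _ hne
    rw [Finset.card_eq_zero, Finset.sdiff_eq_empty_iff_subset] at h0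
    rwa [← Finset.eq_of_subset_of_card_le h0 (by omega)]
  | succ r ih =>
    intro T₁ hr hc hs hlt hne
    have h2 : (T₂ \ T₁).card = r + 1 := by
      rw [← hr]
      exact (Finset.card_sdiff_comm (by omega)).symm
    obtain ⟨a, ha⟩ := Finset.card_pos.mp (show 0 < (T₁ \ T₂).card by omega)
    obtain ⟨b, hb⟩ := Finset.card_pos.mp (show 0 < (T₂ \ T₁).card by omega)
    rw [Finset.mem_sdiff] at ha hb
    have hab : a < b := hlt a ha.1 ha.2 b hb.1 hb.2
    have hbe : b ∉ T₁.erase a := fun h => hb.2 (Finset.mem_of_mem_erase h)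
    have hBc : (T₁.erase a).card = k := by
      rw [Finset.card_erase_of_mem ha.1]
      omega
    have hBs : ∀ i ∈ T₁.erase a, p ≤ i ∧ i ≤ q := fun i hi => hs i (Finset.mem_of_mem_erase hi)
    have hxB : x ∉ T₁.erase a := fun h => absurd hx (not_lt.mpr (hBs x h).1)
    have hxa : x < a := lt_of_lt_of_le hx (hs a ha.1).1
    have hins : insert a (T₁.erase a) = T₁ := Finset.insert_erase ha.1
    apply ih (insert b (T₁.erase a))
    · have : insert b (T₁.erase a) \ T₂ = (T₁ \ T₂).erase a := by
        ext i
        simp only [Finset.mem_sdiff, Finset.mem_insert, Finset.mem_erase]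
        constructor
        · rintro ⟨rfl | h, h'⟩
          · exact absurd hb.1 h'
          · exact ⟨h.1, h.2, h'⟩
        · rintro ⟨h, h', h''⟩
          exact ⟨Or.inr ⟨h, h'⟩, h''⟩
      rw [this, Finset.card_erase_of_mem (Finset.mem_sdiff.mpr ha)]
      omega
    · rw [Finset.card_insert_of_notMem hbe, hBc]
    · intro i hi
      rcases Finset.mem_insert.mp hi with rfl | h
      · exact hs₂ _ hb.1
      · exact hBs i h
    · intro u hu hu2 v hv hv1
      rcases Finset.mem_insert.mp hu with rfl | h
      · exact absurd hb.1 hu2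
      · apply hlt u (Finset.mem_of_mem_erase h) hu2 v hv
        intro hvT
        apply hv1
        refine Finset.mem_insert_of_mem (Finset.mem_erase.mpr ⟨?_, hvT⟩)
        rintro rfl
        exact ha.2 hv
    · intro hcon
      apply hF (T₁.erase a) hBc
      refine ⟨x, a, b, hxa, hab, hxB, Finset.notMem_erase a T₁, hbe, ?_, ?_⟩
      · rw [hσ _ hBc hBs, hins]
        exact hne.symm
      · rw [hins, hcon]
        exact hne

/-- The link of the first element is a flip sequence. -/
theorem link_flip {N k : ℕ} (hk : 1 ≤ k) (sgn : Finset (Fin (N + 1)) → Bool)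
    (hF : FlipSeq k sgn) :
    FlipSeq (k - 1) (fun B : Finset (Fin N) => sgn (insert 0 (B.map (Fin.succEmb N)))) := by
  rintro A hA ⟨i, j, l, hij, hjl, hi, hj, hl, h1, h2⟩
  have h0 : (0 : Fin (N + 1)) ∉ A.map (Fin.succEmb N) := by
    simp [Fin.succ_ne_zero]
  have hmem : ∀ i : Fin N, i ∉ A → i.succ ∉ insert 0 (A.map (Fin.succEmb N)) := by
    intro i hi
    simp [Fin.succ_ne_zero, hi]
  have hins : ∀ i : Fin N, insert 0 ((insert i A).map (Fin.succEmb N)) =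
      insert i.succ (insert 0 (A.map (Fin.succEmb N))) := by
    intro i
    rw [Finset.map_insert, Finset.insert_comm]
    rfl
  apply hF (insert 0 (A.map (Fin.succEmb N)))
  · rw [Finset.card_insert_of_notMem h0, Finset.card_map]
    omega
  · refine ⟨i.succ, j.succ, l.succ, Fin.succ_lt_succ_iff.mpr hij, Fin.succ_lt_succ_iff.mpr hjl,
      hmem i hi, hmem j hj, hmem l hl, ?_, ?_⟩
    · simpa only [hins] using h1
    · simpa only [hins] using h2

/-- A non-homogeneous interval contains a set of sign different from (equal to) a given one. -/
theorem nonhomog_exists {n k : ℕ} (sgn : Finset (Fin n) → Bool) (a b : Fin n)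
    (h : ¬ IntervalHomog k sgn a b) (σ : Bool) :
    ∃ s : Finset (Fin n), s.card = k + 1 ∧ (∀ i ∈ s, a ≤ i ∧ i ≤ b) ∧ sgn s ≠ σ := by
  by_contra hcon
  push Not at hcon
  exact h ⟨σ, hcon⟩

/-- Inductive step: if `k ≥ 2` and `c ≥ 1` is such that the greedy
partition of every flip `(k-1)`-sequence has at most `c` blocks, then the greedy partition
of every flip `k`-sequence has at most `1 + (4k+10)c/k` blocks. -/
theorem flip_sequence_inductive_step :
    ∀ (k c : ℕ), 2 ≤ k → 1 ≤ c →
      (∀ (n m : ℕ) (sgn : Finset (Fin n) → Bool) (cc : Fin (m + 1) → Fin n),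
        FlipSeq (k - 1) sgn → IsGreedyPartition (k - 1) sgn m cc → m ≤ c) →
      ∀ (n m : ℕ) (sgn : Finset (Fin n) → Bool) (cc : Fin (m + 1) → Fin n),
        FlipSeq k sgn → IsGreedyPartition k sgn m cc →
        (m : ℝ) ≤ 1 + (4 * (k : ℝ) + 10) * (c : ℝ) / (k : ℝ) := by
  intro k c hk hc hyp n m sgn cc hF hG
  suffices h : m ≤ 3 * c + 1 by
    have hk0 : (0 : ℝ) < k := by
      have : 0 < k := by omega
      exact_mod_cast this
    have h' : (m : ℝ) ≤ 3 * c + 1 := by exact_mod_cast h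
    have hc0 : (0 : ℝ) ≤ c := Nat.cast_nonneg c
    have : (3 : ℝ) * c ≤ (4 * (k : ℝ) + 10) * (c : ℝ) / (k : ℝ) := by
      rw [le_div_iff₀ hk0]
      nlinarith [mul_nonneg hc0 hk0.le]
    linarith
  obtain ⟨h0, hl, hmono, -, hgr⟩ := hG
  by_cases hm : m ≤ 4
  · omega
  obtain ⟨N, rfl⟩ : ∃ N, n = N + 1 := ⟨n - 1, by have := (cc 0).isLt; omega⟩
  have hlN : (cc (Fin.last m) : ℕ) = N := by simpa using hl
  have hlt : ∀ (i j : ℕ) (hi : i < m + 1) (hj : j < m + 1), i < j →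
      (cc ⟨i, hi⟩ : ℕ) < cc ⟨j, hj⟩ := fun i j hi hj hij => hmono (show (⟨i, hi⟩ : Fin (m + 1)) < ⟨j, hj⟩ from hij)
  have hltN : ∀ (i : ℕ) (hi : i < m), (cc ⟨i, by omega⟩ : ℕ) < N := by
    intro i hi
    have := hlt i m (by omega) (by omega) hi
    have h2 : (cc ⟨m, by omega⟩ : ℕ) = N := hlN
    omega
  have h00 : (cc ⟨0, by omega⟩ : ℕ) = 0 := h0
  have hpos : ∀ (i : ℕ) (hi : i < m + 1), 0 < i → 0 < (cc ⟨i, hi⟩ : ℕ) := by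
    intro i hi h
    have := hlt 0 i (by omega) hi h
    omega
  -- extended blocks are not homogeneous
  have hext : ∀ (j : ℕ) (hj : j + 1 < m), ¬ IntervalHomog k sgn (cc ⟨j, by omega⟩)
      ⟨(cc ⟨j + 1, by omega⟩ : ℕ) + 1, by have := hltN (j + 1) hj; omega⟩ := by
    intro j hj
    apply hgr ⟨j, by omega⟩
    show (cc ⟨j + 1, by omega⟩ : ℕ) < (cc ⟨j + 1, by omega⟩ : ℕ) + 1
    omega
  let sgn' : Finset (Fin N) → Bool := fun B => sgn (insert 0 (B.map (Fin.succEmb N)))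
  have hN : 0 < N := by
    have := hltN 0 (by omega)
    omega
  obtain ⟨m', d, hd0, hdl, hdm, hdh, hdg⟩ :=
    exists_greedy_from (k := k - 1) (by omega) sgn' _ ⟨0, hN⟩ rfl
  have hGd : IsGreedyPartition (k - 1) sgn' m' d := ⟨by rw [hd0], hdl, hdm, hdh, hdg⟩
  have hm' : m' ≤ c := hyp N m' sgn' d (link_flip (by omega) sgn hF) hGd
  have key : ∀ t : Fin ((m - 2) / 3), ∃ p q : Fin N,
      (p : ℕ) + 1 = cc ⟨3 * t + 1, by omega⟩ ∧ (q : ℕ) = cc ⟨3 * t + 4, by omega⟩ ∧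
      ¬ IntervalHomog (k - 1) sgn' p q := by
    intro t
    have ht : 3 * (t : ℕ) + 4 < m := by omega
    have e1 := hpos (3 * t + 1) (by omega) (by omega)
    have e2 := hltN (3 * t + 1) (by omega)
    have e3 := hltN (3 * t + 4) ht
    refine ⟨⟨(cc ⟨3 * t + 1, by omega⟩ : ℕ) - 1, by omega⟩, ⟨cc ⟨3 * t + 4, by omega⟩, e3⟩,
      by simp only; omega, rfl, ?_⟩
    rintro ⟨σ, hσ⟩
    have f12 := hlt (3 * t + 1) (3 * t + 2) (by omega) (by omega) (by omega)
    have f23 := hlt (3 * t + 2) (3 * t + 3) (by omega) (by omega) (by omega)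
    have f34 := hlt (3 * t + 3) (3 * t + 4) (by omega) (by omega) (by omega)
    obtain ⟨T₁, hc1, hs1, hn1⟩ := nonhomog_exists sgn _ _ (hext (3 * t + 1) (by omega)) σ
    obtain ⟨T₂, hc2, hs2, hn2⟩ := nonhomog_exists sgn _ _ (hext (3 * t + 3) (by omega)) (!σ)
    have hs1 : ∀ i ∈ T₁, (cc ⟨3 * t + 1, by omega⟩ : ℕ) ≤ i ∧
        (i : ℕ) ≤ (cc ⟨3 * t + 2, by omega⟩ : ℕ) + 1 := hs1
    have hs2 : ∀ i ∈ T₂, (cc ⟨3 * t + 3, by omega⟩ : ℕ) ≤ i ∧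
        (i : ℕ) ≤ (cc ⟨3 * t + 4, by omega⟩ : ℕ) + 1 := hs2
    have hmv := move_right sgn hF 0 (cc ⟨3 * t + 1, by omega⟩)
      ⟨(cc ⟨3 * t + 4, by omega⟩ : ℕ) + 1, by omega⟩ e1 σ ?_ T₂ hc2 ?_ _ T₁ rfl hc1 ?_ ?_ hn1
    · revert hmv hn2
      cases sgn T₂ <;> cases σ <;> simp
    · intro B hB hBs
      have hB0 : ∀ i ∈ B, i ≠ 0 := by
        rintro i hi rfl
        have : (cc ⟨3 * t + 1, by omega⟩ : ℕ) ≤ ((0 : Fin (N + 1)) : ℕ) := (hBs 0 hi).1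
        simp only [Fin.val_zero] at this
        omega
      obtain ⟨B', rfl⟩ : ∃ B' : Finset (Fin N), B'.map (Fin.succEmb N) = B := by
        classical
        refine ⟨Finset.univ.filter (fun i => i.succ ∈ B), ?_⟩
        ext i
        simp only [Finset.mem_map, Finset.mem_filter, Finset.mem_univ, true_and, Fin.coe_succEmb]
        constructor
        · rintro ⟨a, ha, rfl⟩
          exact ha
        · intro hi
          obtain ⟨a, rfl⟩ := Fin.exists_succ_eq.mpr (hB0 i hi)
          exact ⟨a, hi, rfl⟩
      rw [Finset.card_map] at hB
      apply hσ B' (by omega)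
      intro i hi
      have := hBs i.succ (Finset.mem_map.mpr ⟨i, hi, rfl⟩)
      simp only [Fin.le_def, Fin.val_succ] at this ⊢
      omega
    · intro i hi
      have := hs2 i hi
      simp only [Fin.le_def]
      omega
    · intro i hi
      have := hs1 i hi
      simp only [Fin.le_def]
      omega
    · intro a ha ha2 b hb hb1
      have h1 := hs1 a ha
      have h2 := hs2 b hb
      have hne : a ≠ b := by
        rintro rfl
        exact ha2 hb
      have hne' : (a : ℕ) ≠ b := fun h => hne (Fin.ext h)
      simp only [Fin.lt_def]
      omega
  choose p q hp hq hnh using key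
  have hP := card_nonhomog_le (by omega) sgn' d hGd p q hnh (by
    intro t t' htt
    rw [hp, hq]
    have htt' : (t : ℕ) < t' := htt
    rcases Nat.lt_or_ge (3 * (t : ℕ) + 4) (3 * t' + 1) with h | h
    · exact (hlt _ _ (by omega) (by omega) h).le
    · have : 3 * (t : ℕ) + 4 = 3 * t' + 1 := by omega
      simp only [this]
      exact le_rfl)
  omega
end
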